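/- arXiv:2011.13772 — 11 statements merged into one kernel-verified Lean document; each statement's English description precedes it below -/
import Mathlib

section
/- Let N ≥ 2 and let Ŵ = V Λ Vᵀ ∈ ℝ^{n×n} be an eigendecomposition of the symmetric matrix Ŵ, with V orthogonal and Λ = diag(λ_1, …, λ_n). Consider the gradient descent iterates W_1(k), …, W_N(k) with identical initialization W_j(0) = α·I for some α > 0, and set W(k) = W_N(k)···W_1(k) and M = max(α, ‖Ŵ‖^{1/N}) (operator norm). If 0 < η < 1/((3N−2)·M^{2N−2}), then: (i) for every k ∈ ℕ the matrix E(k) = Vᵀ·W(k)·V − Λ₊ is diagonal, where Λ₊ = diag(max(λ_1,0), …, max(λ_n,0)); and (ii) W(k) converges to V Λ₊ Vᵀ as k → ∞. -/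
/-!
Every factor stays simultaneously diagonalizable by `V`: if all factors equal
`V * diagonal d * Vᵀ`, then so do the partial products (with powers of `d`), and a gradient step
preserves this form while updating each entry by the scalar map
`x ↦ x - η * (x ^ (N - 1) * (x ^ N - l))`, where `l` is the matching eigenvalue of `Ŵ`
(`factors_eq`). It remains to study this scalar recursion, started at `α ∈ (0, M]`, with
`|l| ≤ M ^ N` (`abs_eigenvalue_le`).

* If `l > 0`, put `s = l ^ (1 / N) ≤ M`. Factoring `x ^ N - s ^ N` shows that the new distance to
  `s` is the old one times a factor in `[0, q]`, where
  `q = 1 - η * min α s ^ (2 N - 2) < 1`. So the iterates stay in `[min α s, M]` and converge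
  geometrically to `s` (`scalar_tendsto_of_pos`).
* If `l ≤ 0`, the iterates are positive and decreasing, so they converge, and the limit is a
  nonnegative fixed point of the map, which can only be `0` (`scalar_tendsto_of_nonpos`).
-/

open Matrix Filter

/-- One gradient step on an eigenvalue of the factors, for the target eigenvalue `l`. -/
def scalarStep (N : ℕ) (η l x : ℝ) : ℝ := x - η * (x ^ (N - 1) * (x ^ N - l))

/-- The common eigenvalue of the factors after `k` gradient steps, started from `α`. -/
def scalarIter (N : ℕ) (η l α : ℝ) : ℕ → ℝ
  | 0 => α
  | k + 1 => scalarStep N η l (scalarIter N η l α k)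

lemma scalar_tendsto_of_pos {N : ℕ} (hN : 2 ≤ N) {η s α M : ℝ} (hs : 0 < s) (hsM : s ≤ M)
    (hα : 0 < α) (hαM : α ≤ M) (hη0 : 0 < η) (hη : η * (N * M ^ (2 * N - 2)) ≤ 1) :
    Tendsto (scalarIter N η (s ^ N) α) atTop (nhds s) := by
  have hM : 0 < M := hs.trans_le hsM
  obtain ⟨m, hm⟩ : ∃ m, m = min α s := ⟨_, rfl⟩
  have hm0 : 0 < m := hm ▸ lt_min hα hs
  have hms : m ≤ s := hm ▸ min_le_right _ _
  have hmα : m ≤ α := hm ▸ min_le_left _ _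
  obtain ⟨q, hq⟩ : ∃ q, q = 1 - η * (m ^ (N - 1) * m ^ (N - 1)) := ⟨_, rfl⟩
  have hq1 : q < 1 := by
    have : 0 < η * (m ^ (N - 1) * m ^ (N - 1)) := by positivity
    linarith
  -- the contraction factor at `x` is `c = 1 - η x ^ (N - 1) (x ^ N - s ^ N) / (x - s)`
  have step : ∀ x, m ≤ x → x ≤ M →
      ∃ c, 0 ≤ c ∧ c ≤ q ∧ scalarStep N η (s ^ N) x - s = c * (x - s) := by
    intro x hmx hxM
    have hx : 0 < x := hm0.trans_le hmx
    obtain ⟨G, hG⟩ : ∃ G, G = ∑ i ∈ Finset.range N, x ^ i * s ^ (N - 1 - i) := ⟨_, rfl⟩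
    have hGle : G ≤ N * M ^ (N - 1) := by
      rw [hG, ← nsmul_eq_mul]
      calc _ ≤ (Finset.range N).card • M ^ (N - 1) := by
            apply Finset.sum_le_card_nsmul
            intro i hi
            have hi' : i < N := Finset.mem_range.mp hi
            calc x ^ i * s ^ (N - 1 - i) ≤ M ^ i * M ^ (N - 1 - i) := by gcongr
              _ = M ^ (N - 1) := by rw [← pow_add]; congr 1; omega
        _ = _ := by simp
    have hGge : m ^ (N - 1) ≤ G := by
      rw [hG]
      calc m ^ (N - 1) ≤ x ^ (N - 1) * s ^ (N - 1 - (N - 1)) := by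
            simp only [Nat.sub_self, pow_zero, mul_one]; gcongr
        _ ≤ _ := Finset.single_le_sum (f := fun i => x ^ i * s ^ (N - 1 - i))
            (fun i _ => by positivity) (Finset.mem_range.mpr (by omega))
    have hG0 : 0 ≤ G := le_trans (by positivity) hGge
    have hfac : x ^ N - s ^ N = G * (x - s) := by
      rw [hG]; exact (Commute.all x s).geom_sum₂_mul N |>.symm
    refine ⟨1 - η * (x ^ (N - 1) * G), ?_, ?_, ?_⟩
    · have : η * (x ^ (N - 1) * G) ≤ η * (N * M ^ (2 * N - 2)) := by
        calc η * (x ^ (N - 1) * G) ≤ η * (M ^ (N - 1) * (N * M ^ (N - 1))) := by gcongr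
          _ = η * (N * M ^ (2 * N - 2)) := by
            rw [show 2 * N - 2 = (N - 1) + (N - 1) by omega, pow_add]; ring
      linarith
    · rw [hq]
      gcongr
    · rw [scalarStep, hfac]; ring
  have inv : ∀ k, m ≤ scalarIter N η (s ^ N) α k ∧ scalarIter N η (s ^ N) α k ≤ M := by
    intro k
    induction k with
    | zero => exact ⟨hmα, hαM⟩
    | succ k ih =>
      obtain ⟨c, hc0, hcq, hc⟩ := step _ ih.1 ih.2
      rw [scalarIter]
      constructor <;> nlinarith [ih.1, ih.2]
  have hq0 : 0 ≤ q := by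
    obtain ⟨c, hc0, hcq, -⟩ := step _ (inv 0).1 (inv 0).2
    exact hc0.trans hcq
  have bound : ∀ k, |scalarIter N η (s ^ N) α k - s| ≤ q ^ k * |α - s| := by
    intro k
    induction k with
    | zero => simp [scalarIter]
    | succ k ih =>
      obtain ⟨c, hc0, hcq, hc⟩ := step _ (inv k).1 (inv k).2
      rw [scalarIter, hc, abs_mul, abs_of_nonneg hc0, pow_succ', mul_assoc]
      gcongr
  rw [tendsto_iff_norm_sub_tendsto_zero]
  refine squeeze_zero (fun _ => norm_nonneg _) bound ?_
  simpa using (tendsto_pow_atTop_nhds_zero_of_lt_one hq0 hq1).mul_const |α - s|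

lemma scalar_tendsto_of_nonpos {N : ℕ} (hN : 2 ≤ N) {η l α M : ℝ} (hl : l ≤ 0)
    (hlM : |l| ≤ M ^ N) (hα : 0 < α) (hαM : α ≤ M) (hη0 : 0 < η)
    (hη : η * (2 * M ^ (2 * N - 2)) < 1) :
    Tendsto (scalarIter N η l α) atTop (nhds 0) := by
  have hM : 0 < M := hα.trans_le hαM
  rw [abs_of_nonpos hl] at hlM
  have step : ∀ x, 0 < x → x ≤ M → 0 < scalarStep N η l x ∧ scalarStep N η l x ≤ x := by
    intro x hx hxM
    have hle : 0 ≤ η * (x ^ (N - 1) * (x ^ N - l)) := by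
      have : 0 ≤ x ^ N - l := by have := pow_pos hx N; linarith
      positivity
    refine ⟨?_, by rw [scalarStep]; linarith⟩
    have h1 : η * (x ^ (N - 2) * (x ^ N - l)) ≤ η * (2 * M ^ (2 * N - 2)) := by
      calc η * (x ^ (N - 2) * (x ^ N - l)) ≤ η * (M ^ (N - 2) * (2 * M ^ N)) := by
            have h2 : x ^ N ≤ M ^ N := by gcongr
            have h3 : x ^ N - l ≤ 2 * M ^ N := by linarith
            have h4 : 0 ≤ x ^ N - l := by have := pow_pos hx N; linarith
            gcongr
        _ = η * (2 * M ^ (2 * N - 2)) := by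
            rw [show 2 * N - 2 = (N - 2) + N by omega, pow_add]; ring
    have h4 : scalarStep N η l x = x * (1 - η * (x ^ (N - 2) * (x ^ N - l))) := by
      rw [scalarStep, show N - 1 = (N - 2) + 1 by omega, pow_succ]; ring
    rw [h4]
    exact mul_pos hx (by linarith)
  have inv : ∀ k, 0 < scalarIter N η l α k ∧ scalarIter N η l α k ≤ M := by
    intro k
    induction k with
    | zero => exact ⟨hα, hαM⟩
    | succ k ih =>
      have := step _ ih.1 ih.2
      exact ⟨this.1, this.2.trans ih.2⟩
  have anti : Antitone (scalarIter N η l α) :=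
    antitone_nat_of_succ_le fun k => (step _ (inv k).1 (inv k).2).2
  have lim := tendsto_atTop_ciInf anti ⟨0, by rintro _ ⟨k, rfl⟩; exact (inv k).1.le⟩
  obtain ⟨L, hL⟩ : ∃ L, L = ⨅ k, scalarIter N η l α k := ⟨_, rfl⟩
  rw [← hL] at lim
  have hL0 : 0 ≤ L := ge_of_tendsto' lim fun k => (inv k).1.le
  have hcont : Continuous (scalarStep N η l) := by unfold scalarStep; fun_prop
  have hfix : L = scalarStep N η l L :=
    tendsto_nhds_unique ((tendsto_add_atTop_iff_nat 1).mpr lim)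
      ((hcont.tendsto L).comp lim)
  have hL_zero : L = 0 := by
    by_contra hne
    have hpos : 0 < L := lt_of_le_of_ne hL0 (Ne.symm hne)
    have : 0 < η * (L ^ (N - 1) * (L ^ N - l)) := by
      have : 0 < L ^ N - l := by have := pow_pos hpos N; linarith
      positivity
    rw [scalarStep] at hfix
    linarith
  rwa [hL_zero] at lim

lemma scalar_pow_tendsto {N : ℕ} (hN : 2 ≤ N) {η l α M : ℝ}
    (hlM : |l| ≤ M ^ N) (hα : 0 < α) (hαM : α ≤ M) (hη0 : 0 < η)
    (hη : η < 1 / (((3 * N - 2 : ℕ) : ℝ) * M ^ (2 * N - 2))) :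
    Tendsto (fun k => scalarIter N η l α k ^ N) atTop (nhds (max l 0)) := by
  have hM : 0 < M := hα.trans_le hαM
  have hN0 : N ≠ 0 := by omega
  have hNc : ((N : ℕ) : ℝ) ≤ ((3 * N - 2 : ℕ) : ℝ) := by exact_mod_cast (by omega)
  have h2c : (2 : ℝ) ≤ ((3 * N - 2 : ℕ) : ℝ) := by exact_mod_cast (by omega)
  have hη' : η * (((3 * N - 2 : ℕ) : ℝ) * M ^ (2 * N - 2)) < 1 := by
    rwa [lt_div_iff₀ (mul_pos (by linarith) (by positivity))] at hη
  rcases le_or_gt l 0 with hl | hl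
  · rw [max_eq_right hl]
    have := (scalar_tendsto_of_nonpos hN hl hlM hα hαM hη0
      (lt_of_le_of_lt (by gcongr) hη')).pow N
    rwa [zero_pow hN0] at this
  · rw [max_eq_left hl.le]
    obtain ⟨s, hs⟩ : ∃ s, s = l ^ ((N : ℝ)⁻¹) := ⟨_, rfl⟩
    have hs0 : 0 < s := hs ▸ Real.rpow_pos_of_pos hl _
    have hsN : s ^ N = l := by rw [hs]; exact Real.rpow_inv_natCast_pow hl.le hN0
    have hsM : s ≤ M := by
      rw [← pow_le_pow_iff_left₀ hs0.le hM.le hN0, hsN]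
      exact (le_abs_self l).trans hlM
    have := (scalar_tendsto_of_pos hN hs0 hsM hα hαM hη0
      (le_trans (by gcongr) hη'.le)).pow N
    rwa [hsN] at this

/-- The columns of `V` are eigenvectors, so the eigenvalues are bounded by the operator norm. -/
lemma abs_eigenvalue_le {n : ℕ} {A V : Matrix (Fin n) (Fin n) ℝ} {lam : Fin n → ℝ}
    (hV : Vᵀ * V = 1) (hA : A = V * diagonal lam * Vᵀ) (i : Fin n) :
    |lam i| ≤ ‖Matrix.toEuclideanCLM (𝕜 := ℝ) A‖ := by
  have hAV : A * V = V * diagonal lam := by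
    rw [hA, Matrix.mul_assoc, hV, Matrix.mul_one]
  have heig : Matrix.toEuclideanCLM (𝕜 := ℝ) A (WithLp.toLp 2 (V *ᵥ Pi.single i 1)) =
      lam i • WithLp.toLp 2 (V *ᵥ Pi.single i 1) := by
    rw [Matrix.toEuclideanCLM_toLp, Matrix.mulVec_mulVec, hAV, ← Matrix.mulVec_mulVec,
      Matrix.diagonal_mulVec_single, mul_one, ← WithLp.toLp_smul, ← Matrix.mulVec_smul,
      ← Pi.single_smul, smul_eq_mul, mul_one]
  have hne : (WithLp.toLp 2 (V *ᵥ Pi.single i 1) : EuclideanSpace ℝ (Fin n)) ≠ 0 := by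
    intro h0
    have h1 : V *ᵥ (Pi.single i 1 : Fin n → ℝ) = 0 := by
      simpa using congrArg WithLp.ofLp h0
    have h2 := congrArg (Vᵀ *ᵥ ·) h1
    simp only [Matrix.mulVec_mulVec, hV, Matrix.one_mulVec, Matrix.mulVec_zero] at h2
    simpa using congrFun h2 i
  have := (Matrix.toEuclideanCLM (𝕜 := ℝ) A).le_opNorm (WithLp.toLp 2 (V *ᵥ Pi.single i 1))
  rw [heig, norm_smul, Real.norm_eq_abs] at this
  exact le_of_mul_le_mul_right this (norm_pos_iff.mpr hne)

lemma conj_diagonal_mul {n : ℕ} {V : Matrix (Fin n) (Fin n) ℝ} (hV : Vᵀ * V = 1)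
    (a b : Fin n → ℝ) :
    (V * diagonal a * Vᵀ) * (V * diagonal b * Vᵀ) = V * diagonal (a * b) * Vᵀ := by
  calc _ = V * diagonal a * (Vᵀ * V) * diagonal b * Vᵀ := by simp only [Matrix.mul_assoc]
    _ = V * (diagonal a * diagonal b) * Vᵀ := by
      rw [hV, Matrix.mul_one, Matrix.mul_assoc V]
    _ = _ := by rw [Matrix.diagonal_mul_diagonal]; rfl

lemma conj_diagonal_pow {n : ℕ} {V : Matrix (Fin n) (Fin n) ℝ} (hV : Vᵀ * V = 1)
    (a : Fin n → ℝ) (m : ℕ) :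
    (V * diagonal a * Vᵀ) ^ m = V * diagonal (a ^ m) * Vᵀ := by
  induction m with
  | zero =>
    have : V * Vᵀ = 1 := mul_eq_one_comm.mp hV
    simp [this]
  | succ m ih => rw [pow_succ, ih, conj_diagonal_mul hV, pow_succ]

lemma conj_diagonal_transpose {n : ℕ} (V : Matrix (Fin n) (Fin n) ℝ) (a : Fin n → ℝ) :
    (V * diagonal a * Vᵀ)ᵀ = V * diagonal a * Vᵀ := by
  simp [Matrix.transpose_mul, Matrix.mul_assoc]

/-- All factors coincide and stay diagonal in the eigenbasis of `Ŵ`, with eigenvalues given by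
the scalar recursion. -/
lemma factors_eq {n N : ℕ} {What V : Matrix (Fin n) (Fin n) ℝ} {lam : Fin n → ℝ}
    (hV : Vᵀ * V = 1) (hdecomp : What = V * diagonal lam * Vᵀ) {α η : ℝ}
    {W : Fin N → ℕ → Matrix (Fin n) (Fin n) ℝ}
    (hinit : ∀ j, W j 0 = α • (1 : Matrix (Fin n) (Fin n) ℝ))
    {P : ℕ → Matrix (Fin n) (Fin n) ℝ}
    (hP : ∀ k, P k = ((List.ofFn fun i : Fin N => W i k).reverse).prod)
    (hupd : ∀ (j : Fin N) (k : ℕ),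
      W j (k+1) = W j k -
        η • ((((List.ofFn fun i : Fin N => W i k).drop (j.val + 1)).reverse.prod)ᵀ *
          (P k - What) *
          (((List.ofFn fun i : Fin N => W i k).take j.val).reverse.prod)ᵀ)) (k : ℕ) :
    (∀ j, W j k = V * diagonal (fun i => scalarIter N η (lam i) α k) * Vᵀ) ∧
      P k = V * diagonal (fun i => scalarIter N η (lam i) α k ^ N) * Vᵀ := by
  have hP' : ∀ k, (∀ j, W j k = V * diagonal (fun i => scalarIter N η (lam i) α k) * Vᵀ) →
      P k = V * diagonal (fun i => scalarIter N η (lam i) α k ^ N) * Vᵀ := by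
    intro k h
    rw [hP]
    simp only [h, List.ofFn_const, List.reverse_replicate, List.prod_replicate]
    rw [conj_diagonal_pow hV]
    rfl
  suffices h : ∀ j, W j k = V * diagonal (fun i => scalarIter N η (lam i) α k) * Vᵀ from
    ⟨h, hP' k h⟩
  induction k with
  | zero =>
    intro j
    have hV' : V * Vᵀ = 1 := mul_eq_one_comm.mp hV
    rw [hinit]
    simp only [scalarIter]
    rw [← Matrix.smul_one_eq_diagonal, Matrix.mul_smul, Matrix.mul_one, Matrix.smul_mul, hV']
  | succ k ih =>
    intro j
    have hj := j.isLt
    rw [hupd, hP' k ih, hdecomp]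
    simp only [ih, List.ofFn_const, List.drop_replicate, List.take_replicate,
      List.reverse_replicate, List.prod_replicate]
    rw [conj_diagonal_pow hV, conj_diagonal_pow hV, conj_diagonal_transpose,
      conj_diagonal_transpose, ← Matrix.sub_mul, ← Matrix.mul_sub, Matrix.diagonal_sub,
      conj_diagonal_mul hV, conj_diagonal_mul hV, ← Matrix.smul_mul, ← Matrix.mul_smul,
      ← Matrix.diagonal_smul, ← Matrix.sub_mul, ← Matrix.mul_sub, Matrix.diagonal_sub]
    congr 3
    funext i
    have hpow : N - (j.val + 1) + min j.val N = N - 1 := by omega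
    simp only [Pi.smul_apply, Pi.mul_apply, Pi.pow_apply, smul_eq_mul, scalarIter, scalarStep]
    rw [← hpow, pow_add]
    ring

/-- **Theorem 1 (identical initialization).** For gradient descent on deep matrix
factorization of a symmetric ground truth `Ŵ = V Λ Vᵀ` with identical initialization
`W_j(0) = α I` and small enough step size, the error `Vᵀ W(k) V − Λ₊` is diagonal for
every `k`, and the product `W(k)` converges to `V Λ₊ Vᵀ`. -/
theorem identical_initialization_convergence
    (n N : ℕ) (hN : 2 ≤ N)
    (What V : Matrix (Fin n) (Fin n) ℝ) (lam : Fin n → ℝ)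
    (hWsymm : What.IsSymm)
    (hV : Vᵀ * V = 1)
    (hdecomp : What = V * Matrix.diagonal lam * Vᵀ)
    (α η : ℝ) (hα : 0 < α)
    (W : Fin N → ℕ → Matrix (Fin n) (Fin n) ℝ)
    (hinit : ∀ j, W j 0 = α • (1 : Matrix (Fin n) (Fin n) ℝ))
    (P : ℕ → Matrix (Fin n) (Fin n) ℝ)
    (hP : ∀ k, P k = ((List.ofFn fun i : Fin N => W i k).reverse).prod)
    (hupd : ∀ (j : Fin N) (k : ℕ),
      W j (k+1) = W j k -
        η • ((((List.ofFn fun i : Fin N => W i k).drop (j.val + 1)).reverse.prod)ᵀ *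
          (P k - What) *
          (((List.ofFn fun i : Fin N => W i k).take j.val).reverse.prod)ᵀ))
    (M : ℝ)
    (hM : M = max α (‖Matrix.toEuclideanCLM (𝕜 := ℝ) What‖ ^ ((1 : ℝ)/N)))
    (hη0 : 0 < η)
    (hη : η < 1 / (((3*N - 2 : ℕ) : ℝ) * M ^ (2*N - 2))) :
    (∀ k : ℕ,
      (Vᵀ * P k * V - Matrix.diagonal fun i => max (lam i) 0).IsDiag) ∧
    Tendsto P atTop
      (nhds (V * Matrix.diagonal (fun i => max (lam i) 0) * Vᵀ)) := by
  have h := factors_eq hV hdecomp hinit hP hupd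
  have hαM : α ≤ M := hM ▸ le_max_left _ _
  have hM0 : 0 < M := hα.trans_le hαM
  have hlam : ∀ i, |lam i| ≤ M ^ N := fun i => by
    refine (abs_eigenvalue_le hV hdecomp i).trans ?_
    calc ‖Matrix.toEuclideanCLM (𝕜 := ℝ) What‖
        = (‖Matrix.toEuclideanCLM (𝕜 := ℝ) What‖ ^ ((1 : ℝ) / N)) ^ N := by
          rw [one_div, Real.rpow_inv_natCast_pow (norm_nonneg _) (by omega)]
      _ ≤ M ^ N := by
          gcongr
          exact hM ▸ le_max_right _ _
  constructor
  · intro k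
    have hk : Vᵀ * P k * V = diagonal (fun i => scalarIter N η (lam i) α k ^ N) := by
      rw [(h k).2]
      calc _ = (Vᵀ * V) * diagonal (fun i => scalarIter N η (lam i) α k ^ N) * (Vᵀ * V) := by
            simp only [Matrix.mul_assoc]
        _ = _ := by rw [hV, Matrix.one_mul, Matrix.mul_one]
    rw [hk, Matrix.diagonal_sub]
    exact Matrix.isDiag_diagonal _
  · rw [funext fun k => (h k).2]
    have hd : Tendsto (fun k i => scalarIter N η (lam i) α k ^ N) atTop
        (nhds fun i => max (lam i) 0) :=
      tendsto_pi_nhds.mpr fun i => scalar_pow_tendsto hN (hlam i) hα hαM hη0 hη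
    have hc : Continuous fun d : Fin n → ℝ => V * diagonal d * Vᵀ := by fun_prop
    exact (hc.tendsto _).comp hd
end

section
/- Let N ≥ 2, λ > 0, α > 0 and let d be the gradient-descent scalar sequence. If 0 < η < 1/(N·max(α, λ^{1/N})^{2N−2}), then: (i) d(k) → λ^{1/N} as k → ∞; (ii) the error |d(k)^N − λ| is nonincreasing in k; (iii) if λ ≥ α^N then d(k) ∈ [α, λ^{1/N}] for all k, while if λ < α^N then d(k) ∈ [λ^{1/N}, α] for all k. -/
/-!
With `r = λ^{1/N}`, factor `x ^ N - r ^ N = (x - r) * S(x)`, where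
`S(x) = ∑ i < N, x ^ i * r ^ (N - 1 - i)`. One gradient step from `x` then reads
`x' - r = (1 - c) * (x - r)` with `c = η * x ^ (N - 1) * S(x)`. If `α` and `r` lie in `[m, M]`
with `m = min α r > 0` and `M = max α r`, then for `x ∈ [m, M]` the two factors satisfy
`N * m ^ (N - 1) ≤ S(x) ≤ N * M ^ (N - 1)`, so the step-size condition gives
`0 < η * N * m ^ (2 * N - 2) ≤ c ≤ 1` (`gd_step_contraction`). Hence `x'` lies between `x` and `r`;
the iterates never leave `[m, M]`, never cross `r`, and approach it at a geometric rate.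
-/

/-- The cofactor `S` of `x - y` in `x ^ N - y ^ N` is comparable to the `(N - 1)`-st power:
each of its `N` summands is homogeneous of degree `N - 1`. -/
lemma geom_sum₂_mem_Icc (N : ℕ) {x y m M : ℝ} (hm : 0 < m) (hmx : m ≤ x) (hxM : x ≤ M)
    (hmy : m ≤ y) (hyM : y ≤ M) :
    ∑ i ∈ Finset.range N, x ^ i * y ^ (N - 1 - i) ∈
      Set.Icc (N * m ^ (N - 1)) (N * M ^ (N - 1)) := by
  have hsplit (t : ℝ) : ∀ i ∈ Finset.range N, t ^ (N - 1) = t ^ i * t ^ (N - 1 - i) := by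
    intro i hi
    rw [← pow_add]
    congr 1
    have := Finset.mem_range.mp hi
    omega
  have hx : 0 ≤ x := hm.le.trans hmx
  have hy : 0 ≤ y := hm.le.trans hmy
  constructor
  · have h := Finset.card_nsmul_le_sum (Finset.range N)
      (fun i => x ^ i * y ^ (N - 1 - i)) (m ^ (N - 1)) (fun i hi => by
        rw [hsplit m i hi]; gcongr)
    simpa using h
  · have hM : 0 ≤ M := hx.trans hxM
    have h := Finset.sum_le_card_nsmul (Finset.range N)
      (fun i => x ^ i * y ^ (N - 1 - i)) (M ^ (N - 1)) (fun i hi => by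
        rw [hsplit M i hi]; gcongr)
    simpa using h

/-- One gradient step multiplies `x - r` by `1 - c`, with `c ∈ [q, 1]` for a rate
`q = η * N * m ^ (2 * N - 2)` that does not depend on the point `x ∈ [m, M]`. -/
lemma gd_step_contraction {N : ℕ} {η x r m M : ℝ} (hm : 0 < m) (hmx : m ≤ x) (hxM : x ≤ M)
    (hmr : m ≤ r) (hrM : r ≤ M) (hη0 : 0 < η) (hη : η * (N * M ^ (2 * N - 2)) ≤ 1) :
    ∃ c, η * (N * m ^ (2 * N - 2)) ≤ c ∧ c ≤ 1 ∧
      x - η * x ^ (N - 1) * (x ^ N - r ^ N) - r = (1 - c) * (x - r) := by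
  obtain ⟨hS1, hS2⟩ := geom_sum₂_mem_Icc N hm hmx hxM hmr hrM
  have hfac := (Commute.all x r).geom_sum₂_mul N
  set S := ∑ i ∈ Finset.range N, x ^ i * r ^ (N - 1 - i)
  have hx : 0 ≤ x := hm.le.trans hmx
  have hM : 0 ≤ M := hx.trans hxM
  have hS0 : 0 ≤ S := le_trans (by positivity) hS1
  have hpow (t : ℝ) : t ^ (2 * N - 2) = t ^ (N - 1) * t ^ (N - 1) := by
    rw [← pow_add]; congr 1; omega
  refine ⟨η * (x ^ (N - 1) * S), ?_, ?_, ?_⟩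
  · have : m ^ (N - 1) * (N * m ^ (N - 1)) ≤ x ^ (N - 1) * S := by gcongr
    rw [hpow]
    exact mul_le_mul_of_nonneg_left (by linarith) hη0.le
  · have : x ^ (N - 1) * S ≤ M ^ (N - 1) * (N * M ^ (N - 1)) := by gcongr
    refine le_trans ?_ hη
    rw [hpow]
    exact mul_le_mul_of_nonneg_left (by linarith) hη0.le
  · rw [← hfac]
    ring

/-- **Scalar gradient descent, positive eigenvalue.** For `N ≥ 2`, `λ > 0`, `α > 0` and
`0 < η < 1/(N max(α, λ^{1/N})^{2N−2})`, the sequence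
`d(k+1) = d(k) − η d(k)^{N−1}(d(k)^N − λ)`, `d(0) = α` converges to `λ^{1/N}`,
the error `|d(k)^N − λ|` is nonincreasing, and the iterates stay in `[α, λ^{1/N}]`
(resp. `[λ^{1/N}, α]`) according to whether `λ ≥ α^N` or `λ < α^N`. -/
theorem scalar_gd_positive_lambda_convergence
    (N : ℕ) (hN : 2 ≤ N) (lam α η : ℝ) (hlam : 0 < lam) (hα : 0 < α)
    (d : ℕ → ℝ) (hd0 : d 0 = α)
    (hrec : ∀ k : ℕ, d (k+1) = d k - η * d k ^ (N-1) * (d k ^ N - lam))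
    (hη0 : 0 < η)
    (hη : η < 1 / ((N : ℝ) * (max α (lam ^ ((1:ℝ)/N))) ^ (2*N - 2))) :
    Filter.Tendsto d Filter.atTop (nhds (lam ^ ((1:ℝ)/N))) ∧
    (Antitone fun k => |d k ^ N - lam|) ∧
    (α ^ N ≤ lam → ∀ k : ℕ, d k ∈ Set.Icc α (lam ^ ((1:ℝ)/N))) ∧
    (lam < α ^ N → ∀ k : ℕ, d k ∈ Set.Icc (lam ^ ((1:ℝ)/N)) α) := by
  set r := lam ^ ((1:ℝ)/N) with hr
  have hr0 : 0 < r := Real.rpow_pos_of_pos hlam _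
  have hrN : r ^ N = lam := by
    rw [hr, one_div]
    exact Real.rpow_inv_natCast_pow hlam.le (by omega)
  set M := max α r
  set m := min α r
  have hm : 0 < m := lt_min hα hr0
  have hmr : m ≤ r := min_le_right _ _
  have hrM : r ≤ M := le_max_right _ _
  have hM : 0 < M := hr0.trans_le hrM
  have hN0 : (0:ℝ) < N := by exact_mod_cast (by omega : 0 < N)
  have hηM : η * (N * M ^ (2 * N - 2)) ≤ 1 := ((lt_div_iff₀ (by positivity)).mp hη).le
  set q := η * (N * m ^ (2 * N - 2))
  have hq0 : 0 < q := by positivity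
  have step (k : ℕ) (h1 : m ≤ d k) (h2 : d k ≤ M) :
      ∃ c, q ≤ c ∧ c ≤ 1 ∧ d (k + 1) - r = (1 - c) * (d k - r) := by
    rw [hrec k, ← hrN]
    exact gd_step_contraction hm h1 h2 hmr hrM hη0 hηM
  have hmem (k : ℕ) : m ≤ d k ∧ d k ≤ M := by
    induction k with
    | zero => rw [hd0]; exact ⟨min_le_left _ _, le_max_left _ _⟩
    | succ k ih =>
      obtain ⟨c, hqc, hc1, hc⟩ := step k ih.1 ih.2
      -- `d (k + 1)` is the convex combination `(1 - c) * d k + c * r`.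
      constructor
      · nlinarith [mul_nonneg (sub_nonneg.2 hc1) (sub_nonneg.2 ih.1),
          mul_nonneg (hq0.le.trans hqc) (sub_nonneg.2 hmr)]
      · nlinarith [mul_nonneg (sub_nonneg.2 hc1) (sub_nonneg.2 ih.2),
          mul_nonneg (hq0.le.trans hqc) (sub_nonneg.2 hrM)]
  replace step (k : ℕ) := step k (hmem k).1 (hmem k).2
  have hq1 : q ≤ 1 := by
    obtain ⟨c, h1, h2, _⟩ := step 0
    exact h1.trans h2
  refine ⟨?_, ?_, ?_, ?_⟩
  · have hgeom (k : ℕ) : |d k - r| ≤ (1 - q) ^ k * |d 0 - r| := by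
      induction k with
      | zero => simp
      | succ k ih =>
        obtain ⟨c, hqc, hc1, hc⟩ := step k
        rw [hc, abs_mul, abs_of_nonneg (sub_nonneg.2 hc1), pow_succ', mul_assoc]
        have : 0 ≤ 1 - c := sub_nonneg.2 hc1
        gcongr
    have hlim : Filter.Tendsto (fun k : ℕ => (1 - q) ^ k * |d 0 - r|) Filter.atTop (nhds 0) := by
      simpa using (tendsto_pow_atTop_nhds_zero_of_lt_one (sub_nonneg.2 hq1)
        (by linarith : 1 - q < 1)).mul_const |d 0 - r|
    rw [tendsto_iff_dist_tendsto_zero]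
    exact squeeze_zero (fun _ => dist_nonneg) hgeom hlim
  · refine antitone_nat_of_succ_le fun k => ?_
    obtain ⟨c, hqc, hc1, hc⟩ := step k
    have hc0 : 0 ≤ c := hq0.le.trans hqc
    have hd : 0 ≤ d k := hm.le.trans (hmem k).1
    have hd' : 0 ≤ d (k + 1) := hm.le.trans (hmem (k + 1)).1
    rw [← hrN]
    rcases le_total (d k) r with h | h
    · have h1 : d k ≤ d (k + 1) := by nlinarith
      have h2 : d (k + 1) ≤ r := by nlinarith
      have h1N := pow_le_pow_left₀ hd h1 N
      have h2N := pow_le_pow_left₀ hd' h2 N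
      rw [abs_of_nonpos (by linarith), abs_of_nonpos (by linarith)]
      linarith
    · have h1 : d (k + 1) ≤ d k := by nlinarith
      have h2 : r ≤ d (k + 1) := by nlinarith
      have h1N := pow_le_pow_left₀ hd' h1 N
      have h2N := pow_le_pow_left₀ hr0.le h2 N
      rw [abs_of_nonneg (by linarith), abs_of_nonneg (by linarith)]
      linarith
  · intro h k
    have hαr : α ≤ r := le_of_pow_le_pow_left₀ (by omega) hr0.le (h.trans_eq hrN.symm)
    have := hmem k
    rwa [show m = α from min_eq_left hαr, show M = r from max_eq_right hαr] at this
  · intro h k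
    have hrα : r ≤ α := le_of_pow_le_pow_left₀ (by omega) hα.le (hrN.trans_le h.le)
    have := hmem k
    rwa [show m = r from min_eq_right hrα, show M = α from max_eq_left hrα] at this
end

section
/- Let f : ℝ → ℝ be continuously differentiable, α > 0, and let y : [0,∞) → ℝ be differentiable with y′(t) = f(y(t)) for all t ≥ 0 and y(0) = α. Let I ⊆ ℝ be an interval with α ∈ I and let T ∈ (0,∞] be such that y(t) ∈ I for all t ∈ [0,T]. Assume there are constants K₁, K₂ with |f(x)| ≤ K₁, |f′(x)| ≤ K₂ and f′(x)·f(x) ≥ 0 for all x ∈ I, and let 0 < η < 1/K₂. Define d : ℕ → ℝ by d(0) = α and d(k+1) = d(k) + η·f(d(k)). Assume in addition that f(α) > 0 and that f(x) ≥ 0 for all x ∈ [α, sup_{k ∈ ℕ} d(k)). Set s = ⌈K₁/f(α)⌉. Then y(η·k) ≤ d(k+s) for every k ∈ ℕ such that η·k ≤ T and y(η·k) ∈ I. -/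
open scoped ENNReal

/-!
Write `F x = ∫_α^x du / f u` for the time the flow needs to travel from `α` to `x`. Since
`(f²)' = 2 f f' ≥ 0` on `I`, the function `f` is positive and nondecreasing on `I ∩ [α, ∞)`
(`pos_of_mul_deriv_nonneg`, `monotone_of_mul_deriv_nonneg`). Hence the flow covers the Euler step
from `d j` to `d (j+1) = d j + η f (d j)` in a time of at least
`η f (d j) / f (d (j+1)) ≥ η (1 - log (f (d (j+1)) / f (d j)))`. These losses telescope:
the flow needs at least `η (j - log (f (d j) / f α))` to reach `d j`
(`exists_time_of_le`), and the logarithm is at most `log (K₁ / f α) < ⌈K₁ / f α⌉`.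
So if `d (k+s) < y (η k)`, the flow would reach `d (k+s)` before time `η k` and yet only after
time `η k`.

To avoid inverting `y`, the travel time is replaced by a time `τ` with `y τ = d j`, obtained from
the intermediate value theorem. The sequence `d` itself is nondecreasing because continuity
extends `f ≥ 0` from `[α, sup d)` to every `d j`.
-/

lemma sq_monotoneOn_of_mul_deriv_nonneg {f : ℝ → ℝ} (hf : Differentiable ℝ f) {I : Set ℝ}
    (hI : I.OrdConnected) (hff' : ∀ x ∈ I, 0 ≤ deriv f x * f x) :
    MonotoneOn (fun x => f x ^ 2) I := by
  refine monotoneOn_of_deriv_nonneg hI.convex (hf.pow 2).continuous.continuousOn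
    (hf.pow 2).differentiableOn fun x hx => ?_
  have h := ((hf x).hasDerivAt.pow 2).deriv
  have h2 := hff' x (interior_subset hx)
  have h3 : deriv (fun x => f x ^ 2) x = 2 * (deriv f x * f x) := by
    refine Eq.trans h ?_
    push_cast
    ring
  rw [h3]
  positivity

lemma pos_of_mul_deriv_nonneg {f : ℝ → ℝ} (hf : Differentiable ℝ f) {I : Set ℝ}
    (hI : I.OrdConnected) (hff' : ∀ x ∈ I, 0 ≤ deriv f x * f x) {α x : ℝ} (hα : α ∈ I)
    (hfα : 0 < f α) (hx : x ∈ I) (hαx : α ≤ x) : 0 < f x := by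
  by_contra! hneg
  obtain ⟨c, hc, hfc⟩ := intermediate_value_Icc' hαx hf.continuous.continuousOn ⟨hneg, hfα.le⟩
  have h := sq_monotoneOn_of_mul_deriv_nonneg hf hI hff' hα (hI.out hα hx hc) hc.1
  simp only [hfc] at h
  nlinarith

lemma monotone_of_mul_deriv_nonneg {f : ℝ → ℝ} (hf : Differentiable ℝ f) {I : Set ℝ}
    (hI : I.OrdConnected) (hff' : ∀ x ∈ I, 0 ≤ deriv f x * f x) {α a b : ℝ} (hα : α ∈ I)
    (hfα : 0 < f α) (hb : b ∈ I) (hαa : α ≤ a) (hab : a ≤ b) : f a ≤ f b := by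
  have hfb := pos_of_mul_deriv_nonneg hf hI hff' hα hfα hb (hαa.trans hab)
  exact le_of_sq_le_sq (sq_monotoneOn_of_mul_deriv_nonneg hf hI hff'
    (hI.out hα hb ⟨hαa, hab⟩) hb hab) hfb.le

/-- The Euler sequence never decreases: nonnegativity of `f` below `d k` passes to `d k` itself
by continuity, so the increment `η f (d k)` is nonnegative. -/
lemma euler_monotone {f : ℝ → ℝ} (hf : Continuous f) {α η : ℝ} (hη : 0 ≤ η) (hfα : 0 ≤ f α)
    {d : ℕ → ℝ} (hd0 : d 0 = α) (hdrec : ∀ k, d (k + 1) = d k + η * f (d k))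
    (hfnonneg : ∀ x : ℝ, α ≤ x → (∃ k : ℕ, x < d k) → 0 ≤ f x) : Monotone d := by
  have key : ∀ k, α ≤ d k → 0 ≤ f (d k) := by
    intro k hk
    rcases hk.eq_or_lt with h | h
    · rwa [← h]
    · have hcl : closure (Set.Ico α (d k)) ⊆ {x | 0 ≤ f x} :=
        closure_minimal (fun x hx => hfnonneg x hx.1 ⟨k, hx.2⟩)
          (isClosed_le continuous_const hf)
      rw [closure_Ico h.ne] at hcl
      exact hcl ⟨hk, le_rfl⟩
  have hge : ∀ k, α ≤ d k := by
    intro k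
    induction k with
    | zero => exact hd0.ge
    | succ k ih =>
      rw [hdrec]
      have := mul_nonneg hη (key k ih)
      linarith
  refine monotone_nat_of_le_succ fun k => ?_
  rw [hdrec]
  have := mul_nonneg hη (key k (hge k))
  linarith

/-- As long as `d j` lies below `y S`, the flow passes through `d j` at some time `τ ≤ S`, and
`τ` lags behind the Euler time `η j` by at most `η log (f (d j) / f α)`. Positivity and
monotonicity of `f` are only needed on `[α, y S]`. -/
lemma exists_time_of_le {f y : ℝ → ℝ} {α η S : ℝ} (hη : 0 ≤ η) (hS : 0 ≤ S) (hy0 : y 0 = α)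
    (hy : ∀ t, 0 ≤ t → HasDerivAt y (f (y t)) t) (hymono : MonotoneOn y (Set.Icc 0 S))
    (hpos : ∀ x ∈ Set.Icc α (y S), 0 < f x) (hfmono : MonotoneOn f (Set.Icc α (y S)))
    {d : ℕ → ℝ} (hd0 : d 0 = α) (hdrec : ∀ k, d (k + 1) = d k + η * f (d k))
    (hd : Monotone d) (j : ℕ) (hj : d j ≤ y S) :
    ∃ τ ∈ Set.Icc 0 S, y τ = d j ∧ η * (j - (Real.log (f (d j)) - Real.log (f α))) ≤ τ := by
  induction j with
  | zero => exact ⟨0, ⟨le_rfl, hS⟩, by rw [hy0, hd0], by simp [hd0]⟩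
  | succ j ih =>
    have hstep : d j ≤ d (j + 1) := hd j.le_succ
    have hαd : α ≤ d j := hd0 ▸ hd j.zero_le
    obtain ⟨τ, hτ, hyτ, hle⟩ := ih (hstep.trans hj)
    have hmem : d j ∈ Set.Icc α (y S) := ⟨hαd, hstep.trans hj⟩
    have hmem' : d (j + 1) ∈ Set.Icc α (y S) := ⟨hαd.trans hstep, hj⟩
    have hcont : ContinuousOn y (Set.Icc τ S) := fun t ht =>
      (hy t (hτ.1.trans ht.1)).continuousAt.continuousWithinAt
    obtain ⟨σ, hσ, hyσ⟩ := intermediate_value_Icc hτ.2 hcont ⟨hyτ.le.trans hstep, hj⟩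
    have hσ0 : 0 ≤ σ := hτ.1.trans hσ.1
    refine ⟨σ, ⟨hσ0, hσ.2⟩, hyσ, ?_⟩
    -- On `[τ, σ]` the speed of the flow is at most `f (d (j+1))`.
    have hmvt : y σ - y τ ≤ f (d (j + 1)) * (σ - τ) := by
      refine (convex_Icc τ σ).image_sub_le_mul_sub_of_deriv_le
        (hcont.mono (Set.Icc_subset_Icc_right hσ.2)) ?_ ?_ τ ⟨le_rfl, hσ.1⟩ σ ⟨hσ.1, le_rfl⟩ hσ.1
      · intro t ht
        rw [interior_Icc] at ht
        exact (hy t (hτ.1.trans ht.1.le)).differentiableAt.differentiableWithinAt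
      · intro t ht
        rw [interior_Icc] at ht
        have ht0 : 0 ≤ t := hτ.1.trans ht.1.le
        have htS : t ≤ S := ht.2.le.trans hσ.2
        rw [(hy t ht0).deriv]
        refine hfmono ⟨?_, hymono ⟨ht0, htS⟩ ⟨hS, le_rfl⟩ htS⟩ hmem' ?_
        · exact hy0 ▸ hymono ⟨le_rfl, hS⟩ ⟨ht0, htS⟩ ht0
        · exact hyσ ▸ hymono ⟨ht0, htS⟩ ⟨hσ0, hσ.2⟩ ht.2.le
    rw [hyσ, hyτ, hdrec j, add_sub_cancel_left, ← hdrec j] at hmvt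
    have hp := hpos _ hmem
    have hp' := hpos _ hmem'
    have hdiv : η * (f (d j) / f (d (j + 1))) ≤ σ - τ := by
      rw [← mul_div_assoc, div_le_iff₀ hp']
      linarith
    have hlog := Real.log_le_sub_one_of_pos (div_pos hp hp')
    rw [Real.log_div hp.ne' hp'.ne'] at hlog
    have := mul_le_mul_of_nonneg_left hlog hη
    push_cast
    linarith

/-- **Shifted Euler discretization upper-bounds the flow.** Under the assumptions of the
Euler comparison lemma, if moreover `f(α) > 0` and `f ≥ 0` on `[α, sup_k d(k))`, then with
`s = ⌈K₁/f(α)⌉` one has `y(ηk) ≤ d(k+s)` for every `k` with `ηk ≤ T` and `y(ηk) ∈ I`. -/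
theorem euler_shifted_above_flow
    (f : ℝ → ℝ) (hf : ContDiff ℝ 1 f) (α : ℝ) (hα : 0 < α)
    (y : ℝ → ℝ) (hy0 : y 0 = α)
    (hyderiv : ∀ t : ℝ, 0 ≤ t → HasDerivAt y (f (y t)) t)
    (I : Set ℝ) (hI : I.OrdConnected) (hαI : α ∈ I)
    (T : ℝ≥0∞) (hT : 0 < T)
    (hyI : ∀ t : ℝ, 0 ≤ t → ENNReal.ofReal t ≤ T → y t ∈ I)
    (K₁ K₂ : ℝ)
    (hK₁ : ∀ x ∈ I, |f x| ≤ K₁)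
    (hK₂ : ∀ x ∈ I, |deriv f x| ≤ K₂)
    (hff' : ∀ x ∈ I, 0 ≤ deriv f x * f x)
    (η : ℝ) (hη0 : 0 < η) (hη : η < 1 / K₂)
    (d : ℕ → ℝ) (hd0 : d 0 = α)
    (hdrec : ∀ k : ℕ, d (k+1) = d k + η * f (d k))
    (hfα : 0 < f α)
    (hfnonneg : ∀ x : ℝ, α ≤ x → (∃ k : ℕ, x < d k) → 0 ≤ f x) :
    ∀ k : ℕ, ENNReal.ofReal (η * k) ≤ T → y (η * k) ∈ I →
      y (η * k) ≤ d (k + ⌈K₁ / f α⌉₊) := by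
  intro k hkT hyk
  have hS : 0 ≤ η * k := by positivity
  have hdiff : Differentiable ℝ f := hf.differentiable one_ne_zero
  generalize hSk : η * (k : ℝ) = S at *
  have hyIS : ∀ t ∈ Set.Icc 0 S, y t ∈ I := fun t ht =>
    hyI t ht.1 ((ENNReal.ofReal_le_ofReal ht.2).trans hkT)
  have hycont : ContinuousOn y (Set.Icc 0 S) := fun t ht =>
    (hyderiv t ht.1).continuousAt.continuousWithinAt
  -- The flow cannot cross the level `α` downwards, because its velocity there is `f α > 0`.
  have hyα : ∀ t ∈ Set.Icc 0 S, α ≤ y t := by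
    intro t ht
    have h := image_le_of_deriv_right_lt_deriv_boundary' (f := fun t => -y t)
      (f' := fun t => -f (y t)) (B := fun _ => -α) (B' := fun _ => 0) (a := 0) (b := S)
      hycont.neg (fun x hx => (hyderiv x hx.1).neg.hasDerivWithinAt) (by simp [hy0])
      continuousOn_const (fun x _ => (hasDerivAt_const x (-α)).hasDerivWithinAt)
      (fun x _ hxe => by
        have hxe' : y x = α := neg_injective hxe
        simpa [hxe'] using hfα) ht
    exact neg_le_neg_iff.mp h
  have hymono : MonotoneOn y (Set.Icc 0 S) := by
    refine monotoneOn_of_deriv_nonneg (convex_Icc 0 S) hycont ?_ ?_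
    · exact fun t ht => (hyderiv t
        (interior_subset ht).1).differentiableAt.differentiableWithinAt
    · intro t ht
      have ht' := interior_subset ht
      rw [(hyderiv t ht'.1).deriv]
      exact (pos_of_mul_deriv_nonneg hdiff hI hff' hαI hfα (hyIS t ht') (hyα t ht')).le
  have hsub : Set.Icc α (y S) ⊆ I := hI.out hαI hyk
  have hd := euler_monotone hdiff.continuous hη0.le hfα.le hd0 hdrec hfnonneg
  by_contra! hlt
  obtain ⟨τ, hτ, -, hle⟩ := exists_time_of_le hη0.le hS hy0 hyderiv hymono
    (fun x hx => pos_of_mul_deriv_nonneg hdiff hI hff' hαI hfα (hsub hx) hx.1)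
    (fun a ha b hb hab => monotone_of_mul_deriv_nonneg hdiff hI hff' hαI hfα (hsub hb) ha.1 hab)
    hd0 hdrec hd _ hlt.le
  have hαd : α ≤ d (k + ⌈K₁ / f α⌉₊) := hd0 ▸ hd (Nat.zero_le _)
  have hdI : d (k + ⌈K₁ / f α⌉₊) ∈ I := hsub ⟨hαd, hlt.le⟩
  have hp := pos_of_mul_deriv_nonneg hdiff hI hff' hαI hfα hdI hαd
  have hlog := Real.log_le_sub_one_of_pos (div_pos hp hfα)
  rw [Real.log_div hp.ne' hfα.ne'] at hlog
  have hK : f (d (k + ⌈K₁ / f α⌉₊)) / f α ≤ K₁ / f α :=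
    div_le_div_of_nonneg_right ((le_abs_self _).trans (hK₁ _ hdI)) hfα.le
  have hceil := Nat.le_ceil (K₁ / f α)
  push_cast at hle
  have := hle.trans hτ.2
  rw [← hSk] at this
  have := le_of_mul_le_mul_left this hη0
  linarith
end

section
/- Let N ≥ 2, λ > 0, α > 0, and let d be the gradient-descent scalar sequence with 0 < η < 1/(N·λ^{2−2/N}). Set c_N = (N−1)/(2N−1) and ζ = (c_N·λ)^{1/N}, and define g(x) = x^{N−1}·Σ_{j=1}^{N} λ^{1−j/N}·x^{j−1}. If for some k one has d(k) ∈ [ζ, λ^{1/N}], then: (i) λ^{1/N} − d(k+1) = (1 − η·g(d(k)))·(λ^{1/N} − d(k)); and (ii) (1 − η·N·λ^{2−2/N})·(λ^{1/N} − d(k)) ≤ λ^{1/N} − d(k+1) ≤ (1 − η·N·(c_N·λ)^{2−2/N})·(λ^{1/N} − d(k)). -/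
/-! Write `r = λ^{1/N}`. Every fractional power in the statement is a natural power of `r` or of
`ζ`: `λ = r^N`, `λ^{1-j/N} = r^{N-j}`, `λ^{2-2/N} = r^{2N-2}`, `(c_N λ)^{2-2/N} = ζ^{2N-2}`. The sum in
`g(x)` is therefore the geometric sum `∑_{i<N} x^i r^{N-1-i} = (r^N - x^N)/(r - x)`, so one
gradient step multiplies the error `r - d(k)` by `1 - η g(d(k))`. For `ζ ≤ x ≤ r` each of the `N`
terms of this sum lies between `ζ^{N-1}` and `r^{N-1}`, which gives
`N ζ^{2N-2} ≤ g(x) ≤ N r^{2N-2}` and hence the two-sided bounds. -/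

/-- All the fractional powers of `a` used here have exponent `m/N` with `m` natural. -/
lemma rpow_eq_root_pow {N : ℕ} {a s : ℝ} (ha : 0 ≤ a) (hN : N ≠ 0) (m : ℕ)
    (hs : s * N = m) : a ^ s = (a ^ ((1:ℝ)/N)) ^ m := by
  have hN' : (N:ℝ) ≠ 0 := by exact_mod_cast hN
  rw [← Real.rpow_natCast, ← Real.rpow_mul ha, ← hs]
  congr 1
  field_simp

lemma rpow_two_sub_eq_root_pow {N : ℕ} {a : ℝ} (ha : 0 ≤ a) (hN : 1 ≤ N) :
    a ^ ((2:ℝ) - 2/N) = (a ^ ((1:ℝ)/N)) ^ (N-1) * (a ^ ((1:ℝ)/N)) ^ (N-1) := by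
  rw [← pow_add]
  have hN' : (N:ℝ) ≠ 0 := by exact_mod_cast (by lia : N ≠ 0)
  apply rpow_eq_root_pow ha (by lia)
  push_cast [Nat.cast_sub hN]
  field_simp
  ring

/-- The sum in `g` is the two-variable geometric sum in `x` and `a^{1/N}`. -/
lemma sum_rpow_eq_geom_sum {N : ℕ} {a : ℝ} (ha : 0 ≤ a) (x : ℝ) (hN : 1 ≤ N) :
    ∑ j ∈ Finset.Icc 1 N, a ^ ((1:ℝ) - (j:ℝ)/N) * x ^ (j-1) =
      ∑ i ∈ Finset.range N, x ^ i * (a ^ ((1:ℝ)/N)) ^ (N - 1 - i) := by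
  have hN' : (N:ℝ) ≠ 0 := by exact_mod_cast (by lia : N ≠ 0)
  refine Finset.sum_bij' (fun j _ => j - 1) (fun i _ => i + 1) ?_ ?_ ?_ ?_ ?_
  · simp only [Finset.mem_Icc, Finset.mem_range]; lia
  · simp only [Finset.mem_Icc, Finset.mem_range]; lia
  · simp only [Finset.mem_Icc]; lia
  · simp
  · intro j hj
    obtain ⟨h1, h2⟩ := Finset.mem_Icc.1 hj
    rw [mul_comm, show N - 1 - (j - 1) = N - j by lia]
    congr 1
    apply rpow_eq_root_pow ha (by lia)
    push_cast [Nat.cast_sub h2]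
    field_simp

lemma geom_sum_le {N : ℕ} {x r : ℝ} (hx : 0 ≤ x) (hxr : x ≤ r) :
    ∑ i ∈ Finset.range N, x ^ i * r ^ (N - 1 - i) ≤ N * r ^ (N-1) := by
  have hr := hx.trans hxr
  calc _ ≤ ∑ i ∈ Finset.range N, r ^ (N-1) := by
        refine Finset.sum_le_sum fun i hi => ?_
        have hi' := Finset.mem_range.1 hi
        calc x ^ i * r ^ (N - 1 - i) ≤ r ^ i * r ^ (N - 1 - i) := by gcongr
          _ = r ^ (N-1) := by rw [← pow_add]; congr 1; lia
    _ = _ := by simp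

lemma le_geom_sum {N : ℕ} {z x r : ℝ} (hz : 0 ≤ z) (hzx : z ≤ x) (hxr : x ≤ r) :
    N * z ^ (N-1) ≤ ∑ i ∈ Finset.range N, x ^ i * r ^ (N - 1 - i) := by
  have hx := hz.trans hzx
  have hzr := hzx.trans hxr
  calc (N:ℝ) * z ^ (N-1) = ∑ i ∈ Finset.range N, z ^ (N-1) := by simp
    _ ≤ _ := by
        refine Finset.sum_le_sum fun i hi => ?_
        have hi' := Finset.mem_range.1 hi
        calc z ^ (N-1) = z ^ i * z ^ (N - 1 - i) := by rw [← pow_add]; congr 1; lia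
          _ ≤ x ^ i * r ^ (N - 1 - i) := by gcongr


/-- **Contraction identity in the concave phase.** For `N ≥ 2`, `λ > 0`, small step size,
and `d(k) ∈ [ζ, λ^{1/N}]` with `ζ = (c_N λ)^{1/N}`, `c_N = (N−1)/(2N−1)`, the error
`Δ(k) = λ^{1/N} − d(k)` satisfies `Δ(k+1) = (1 − η g(d(k))) Δ(k)` with
`g(x) = x^{N−1} Σ_{j=1}^N λ^{1−j/N} x^{j−1}`, together with the two-sided geometric bounds. -/
theorem scalar_gd_concave_phase_contraction
    (N : ℕ) (hN : 2 ≤ N) (lam α η : ℝ) (hlam : 0 < lam) (hα : 0 < α)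
    (hη0 : 0 < η) (hη : η < 1 / ((N:ℝ) * lam ^ ((2:ℝ) - 2/N)))
    (d : ℕ → ℝ) (hd0 : d 0 = α)
    (hrec : ∀ k : ℕ, d (k+1) = d k - η * d k ^ (N-1) * (d k ^ N - lam))
    (cN ζ : ℝ)
    (hcN : cN = ((N:ℝ) - 1) / (2*(N:ℝ) - 1))
    (hζ : ζ = (cN * lam) ^ ((1:ℝ)/N))
    (g : ℝ → ℝ)
    (hg : ∀ x : ℝ, g x =
      x ^ (N-1) * ∑ j ∈ Finset.Icc 1 N, lam ^ ((1:ℝ) - (j:ℝ)/N) * x ^ (j-1))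
    (k : ℕ) (hk : d k ∈ Set.Icc ζ (lam ^ ((1:ℝ)/N))) :
    lam ^ ((1:ℝ)/N) - d (k+1) = (1 - η * g (d k)) * (lam ^ ((1:ℝ)/N) - d k) ∧
    (1 - η * (N:ℝ) * lam ^ ((2:ℝ) - 2/N)) * (lam ^ ((1:ℝ)/N) - d k) ≤
      lam ^ ((1:ℝ)/N) - d (k+1) ∧
    lam ^ ((1:ℝ)/N) - d (k+1) ≤
      (1 - η * (N:ℝ) * (cN * lam) ^ ((2:ℝ) - 2/N)) * (lam ^ ((1:ℝ)/N) - d k) := by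
  have hN1 : 1 ≤ N := by lia
  have hN2 : (2:ℝ) ≤ N := by exact_mod_cast hN
  have hc : 0 ≤ cN * lam := by
    rw [hcN]
    exact mul_nonneg (div_nonneg (by linarith) (by linarith)) hlam.le
  have hζ0 : 0 ≤ ζ := hζ ▸ Real.rpow_nonneg hc _
  have hlamN : lam = (lam ^ ((1:ℝ)/N)) ^ N := by
    simpa using rpow_eq_root_pow (s := 1) hlam.le (by lia : N ≠ 0) N (by simp)
  rw [rpow_two_sub_eq_root_pow hlam.le hN1, rpow_two_sub_eq_root_pow hc hN1, ← hζ]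
  have hgx : g (d k) = d k ^ (N-1) *
      ∑ i ∈ Finset.range N, d k ^ i * (lam ^ ((1:ℝ)/N)) ^ (N - 1 - i) := by
    rw [hg, sum_rpow_eq_geom_sum hlam.le _ hN1]
  have hstep := hrec k
  obtain ⟨hzx, hxr⟩ := hk
  set r := lam ^ ((1:ℝ)/N)
  set x := d k
  have hx : 0 ≤ x := hζ0.trans hzx
  have hgeom := geom_sum₂_mul x r N
  have hup := geom_sum_le (N := N) hx hxr
  have hlow := le_geom_sum (N := N) hζ0 hzx hxr
  set S := ∑ i ∈ Finset.range N, x ^ i * r ^ (N - 1 - i)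
  have key : r - d (k+1) = (1 - η * g x) * (r - x) := by
    rw [hstep, hgx, hlamN, ← hgeom]
    ring
  have hg_up : g x ≤ N * (r ^ (N-1) * r ^ (N-1)) := by
    rw [hgx]
    calc x ^ (N-1) * S ≤ r ^ (N-1) * (N * r ^ (N-1)) := by
          have hr := hx.trans hxr
          gcongr
      _ = _ := by ring
  have hg_low : N * (ζ ^ (N-1) * ζ ^ (N-1)) ≤ g x := by
    rw [hgx]
    calc (N:ℝ) * (ζ ^ (N-1) * ζ ^ (N-1)) = ζ ^ (N-1) * (N * ζ ^ (N-1)) := by ring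
      _ ≤ x ^ (N-1) * S := by gcongr
  have hΔ : 0 ≤ r - x := sub_nonneg.2 hxr
  refine ⟨key, ?_, ?_⟩
  · rw [key, mul_assoc η]
    gcongr
  · rw [key, mul_assoc η]
    gcongr
end

section
/- Let n ∈ ℕ, let λ_1 ≥ λ_2 ≥ … ≥ λ_n ≥ 0, let ε > 0, C > 1, α > 0 and let L ∈ {1,…,n−1} with α² < λ_L and λ_{L+1} > 0. Define g_{λ,α}(t) = 1 + (λ/α² − 1)·e^{−2λt}, and for each i define the squared eigenvalue flow μ_i(t) = λ_i/g_{λ_i,α}(t) if λ_i > 0 and μ_i(t) = (2t + α^{−2})^{−1} if λ_i = 0. Define L′ = max{ l ∈ {1,…,n} : λ_l > α² }, assume L < L′, and set ρ̂_L = (Σ_{l=1}^{L} λ_l)/λ_1 and ρ(t) = (Σ_{i=1}^{n} μ_i(t))/μ_1(t). Define the time intervals I₁ = { t ≥ 0 : max_{l ∈ {1,…,L}} |g_{λ_1,α}(t)/g_{λ_l,α}(t) − 1| < ε }, I₂ = { t ≥ 0 : |(g_{λ_1,α}(t)/g_{λ_{L+1},α}(t))·(λ_{L+1}/λ_1)|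 < ρ̂_L·ε/(L′−L) }, and I₃ = { t ≥ 0 : g_{λ_1,α}(t) < C }. Then for all t ∈ I₁ ∩ I₂ ∩ I₃ one has |ρ̂_L − ρ(t)| ≤ 2·ε·ρ̂_L + C·(n−L′)·α²/λ_1. -/
/-!
Write `r i = μ i t / μ 1 t`, so that `ρ t = ∑ r i` and, when `lam i > 0`,
`r i = (g (lam 1) t / g (lam i) t) * (lam i / lam 1)`. The sum is cut at `L` and `L'`.

* For `i ≤ L` the first interval condition gives `|lam i / lam 1 - r i| ≤ ε * (lam i / lam 1)`,
  and these terms add up to at most `ε * ρhat`.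
* For `L < i ≤ L'` the flow is monotone in the eigenvalue (`flow_mono`, from the convexity of the
  exponential), so `0 ≤ r i ≤ r (L + 1)`; by the second interval condition the `L' - L` terms
  add up to at most `ρhat * ε`.
* For `i > L'` we have `lam i ≤ α ^ 2`, so the flow never exceeds its initial value `α ^ 2`
  (`flow_le`), while `1 / μ 1 t = g (lam 1) t / lam 1 ≤ C / lam 1`.
-/

/-- The denominator of the flow is positive: it is a convex combination of `1` and `x / a`. -/
lemma flow_denom_pos {a x t : ℝ} (ha : 0 < a) (hx : 0 < x) (ht : 0 ≤ t) :
    0 < 1 + (x / a - 1) * Real.exp (-2 * x * t) := by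
  have h1 : Real.exp (-2 * x * t) ≤ 1 := Real.exp_le_one_iff.2 (by nlinarith [mul_nonneg hx.le ht])
  have h2 := Real.exp_pos (-2 * x * t)
  have h3 : 0 < x / a * Real.exp (-2 * x * t) := by positivity
  linarith

/-- The flow started at `a` towards the limit `x ≤ a` stays below its initial value. -/
lemma flow_le {a x t : ℝ} (ha : 0 < a) (hx : 0 < x) (ht : 0 ≤ t) (hxa : x ≤ a) :
    x / (1 + (x / a - 1) * Real.exp (-2 * x * t)) ≤ a := by
  have h1 : Real.exp (-2 * x * t) ≤ 1 := Real.exp_le_one_iff.2 (by nlinarith [mul_nonneg hx.le ht])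
  rw [div_le_iff₀ (flow_denom_pos ha hx ht)]
  have h : a * (1 + (x / a - 1) * Real.exp (-2 * x * t))
      = a + (x - a) * Real.exp (-2 * x * t) := by
    field_simp
  rw [h]
  nlinarith

/-- At a fixed time the flow is monotone in its limit. Its reciprocal is
`exp (-2 x t) / a + (1 - exp (-2 x t)) / x`, and both summands decrease in `x`, the second one
because the exponential is convex. -/
lemma flow_mono {a x y t : ℝ} (ha : 0 < a) (hx : 0 < x) (ht : 0 ≤ t) (hxy : x ≤ y) :
    x / (1 + (x / a - 1) * Real.exp (-2 * x * t))
      ≤ y / (1 + (y / a - 1) * Real.exp (-2 * y * t)) := by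
  have hy : 0 < y := hx.trans_le hxy
  rw [div_le_div_iff₀ (flow_denom_pos ha hx ht) (flow_denom_pos ha hy ht)]
  have hexp : Real.exp (-2 * y * t) ≤ Real.exp (-2 * x * t) :=
    Real.exp_le_exp.2 (by nlinarith [mul_le_mul_of_nonneg_right hxy ht])
  -- `-2 x t` is the convex combination of `0` and `-2 y t` with weights `1 - x / y` and `x / y`.
  have hconv : y * Real.exp (-2 * x * t) ≤ (y - x) + x * Real.exp (-2 * y * t) := by
    have h := convexOn_exp.2 (Set.mem_univ 0) (Set.mem_univ (-2 * y * t))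
      (show 0 ≤ 1 - x / y by linarith [(div_le_one hy).2 hxy])
      (show 0 ≤ x / y by positivity) (by ring)
    simp only [smul_eq_mul, mul_zero, zero_add, Real.exp_zero, mul_one] at h
    have e : x / y * (-2 * y * t) = -2 * x * t := by field_simp
    rw [e] at h
    have h' := mul_le_mul_of_nonneg_left h hy.le
    have e' : y * (1 - x / y + x / y * Real.exp (-2 * y * t))
        = (y - x) + x * Real.exp (-2 * y * t) := by field_simp
    linarith
  have h3 : x * y / a * Real.exp (-2 * y * t) ≤ x * y / a * Real.exp (-2 * x * t) := by gcongr
  have e1 : x * (1 + (y / a - 1) * Real.exp (-2 * y * t))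
      = x - x * Real.exp (-2 * y * t) + x * y / a * Real.exp (-2 * y * t) := by ring
  have e2 : y * (1 + (x / a - 1) * Real.exp (-2 * x * t))
      = y - y * Real.exp (-2 * x * t) + x * y / a * Real.exp (-2 * x * t) := by ring
  linarith

/-- Cutting a sum over `1, …, n` at two places. -/
lemma sum_Icc_split (f : ℕ → ℝ) {L M n : ℕ} (hLM : L ≤ M) (hMn : M ≤ n) :
    ∑ i ∈ Finset.Icc 1 n, f i
      = ∑ i ∈ Finset.Icc 1 L, f i + ∑ i ∈ Finset.Ioc L M, f i + ∑ i ∈ Finset.Ioc M n, f i := by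
  have h : ∀ k, Finset.Icc 1 k = Finset.Ioc 0 k := fun k => by ext; simp; omega
  rw [h, h, Finset.sum_Ioc_consecutive f (Nat.zero_le _) hLM,
    Finset.sum_Ioc_consecutive f (Nat.zero_le _) hMn]

/-- **Effective rank of the gradient flow (Theorem `prop:EffectiveRankContinuousPSD`).**
With eigenvalues `λ_1 ≥ … ≥ λ_n ≥ 0`, squared eigenvalue flows `μ_i`, effective rank
`ρ(t)` of the flow and effective rank `ρ̂_L` of the best rank-`L` approximation, for all
times in `I₁ ∩ I₂ ∩ I₃` one has `|ρ̂_L − ρ(t)| ≤ 2ε ρ̂_L + C (n−L') α²/λ_1`. -/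
theorem effective_rank_gradient_flow
    (n : ℕ) (lam : ℕ → ℝ)
    (hmono : ∀ i j : ℕ, 1 ≤ i → i ≤ j → j ≤ n → lam j ≤ lam i)
    (hnonneg : ∀ i : ℕ, 1 ≤ i → i ≤ n → 0 ≤ lam i)
    (ε C α : ℝ) (hε : 0 < ε) (hC : 1 < C) (hα : 0 < α)
    (L : ℕ) (hL1 : 1 ≤ L) (hLn : L + 1 ≤ n)
    (hαL : α^2 < lam L) (hlamL1 : 0 < lam (L+1))
    (L' : ℕ) (hL'1 : 1 ≤ L') (hL'n : L' ≤ n) (hL'big : α^2 < lam L')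
    (hL'max : ∀ l : ℕ, 1 ≤ l → l ≤ n → α^2 < lam l → l ≤ L')
    (hLL' : L < L')
    (g : ℝ → ℝ → ℝ)
    (hg : ∀ lm t : ℝ, g lm t = 1 + (lm / α^2 - 1) * Real.exp (-2*lm*t))
    (μ : ℕ → ℝ → ℝ)
    (hμ : ∀ (i : ℕ) (t : ℝ),
      μ i t = if 0 < lam i then lam i / g (lam i) t else (2*t + (α^2)⁻¹)⁻¹)
    (ρhat : ℝ) (hρhat : ρhat = (∑ l ∈ Finset.Icc 1 L, lam l) / lam 1)
    (ρ : ℝ → ℝ) (hρ : ∀ t : ℝ, ρ t = (∑ i ∈ Finset.Icc 1 n, μ i t) / μ 1 t) :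
    ∀ t : ℝ, 0 ≤ t →
      (∀ l : ℕ, 1 ≤ l → l ≤ L → |g (lam 1) t / g (lam l) t - 1| < ε) →
      |(g (lam 1) t / g (lam (L+1)) t) * (lam (L+1) / lam 1)| < ρhat * ε / ((L':ℝ) - L) →
      g (lam 1) t < C →
      |ρhat - ρ t| ≤ 2 * ε * ρhat + C * ((n:ℝ) - L') * α^2 / lam 1 := by
  intro t ht h1 h2 h3
  have ha : 0 < α ^ 2 := by positivity
  have hlampos : ∀ i, 1 ≤ i → i ≤ L + 1 → 0 < lam i := fun i hi hi' =>
    hlamL1.trans_le (hmono i (L + 1) hi hi' hLn)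
  have hl1 : 0 < lam 1 := hlampos 1 le_rfl (by omega)
  have hgpos : ∀ x, 0 < x → 0 < g x t := fun x hx => by
    rw [hg]; exact flow_denom_pos ha hx ht
  have hg1 := hgpos _ hl1
  have hμpos : ∀ i, 0 < lam i → μ i t = lam i / g (lam i) t := fun i hi => by
    rw [hμ, if_pos hi]
  have hμnn : ∀ i, 0 ≤ μ i t := fun i => by
    rw [hμ]
    split_ifs with h
    · exact (div_pos h (hgpos _ h)).le
    · positivity
  have hμ1 : 0 < μ 1 t := by rw [hμpos 1 hl1]; exact div_pos hl1 hg1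
  have hratio : ∀ i, 0 < lam i →
      μ i t / μ 1 t = (g (lam 1) t / g (lam i) t) * (lam i / lam 1) := fun i hi => by
    have := hgpos _ hi
    rw [hμpos i hi, hμpos 1 hl1]
    field_simp
  have hρt : ρ t = ∑ i ∈ Finset.Icc 1 L, μ i t / μ 1 t + ∑ i ∈ Finset.Ioc L L', μ i t / μ 1 t
      + ∑ i ∈ Finset.Ioc L' n, μ i t / μ 1 t := by
    rw [hρ, Finset.sum_div, sum_Icc_split _ hLL'.le hL'n]
  have hhead : |ρhat - ∑ i ∈ Finset.Icc 1 L, μ i t / μ 1 t| ≤ ε * ρhat := by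
    rw [hρhat, Finset.sum_div, ← Finset.sum_sub_distrib, Finset.mul_sum]
    refine (Finset.abs_sum_le_sum_abs _ _).trans (Finset.sum_le_sum fun i hi => ?_)
    obtain ⟨hi1, hiL⟩ := Finset.mem_Icc.1 hi
    have hpos := hlampos i hi1 (by omega)
    have hq : 0 < lam i / lam 1 := div_pos hpos hl1
    have e : lam i / lam 1 - μ i t / μ 1 t
        = -((g (lam 1) t / g (lam i) t - 1) * (lam i / lam 1)) := by
      rw [hratio i hpos]; ring
    rw [e, abs_neg, abs_mul, abs_of_pos hq]
    exact mul_le_mul_of_nonneg_right (h1 i hi1 hiL).le hq.le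
  have hmid : ∑ i ∈ Finset.Ioc L L', μ i t / μ 1 t ≤ ρhat * ε := by
    have hcard : (0 : ℝ) < (L' : ℝ) - L := sub_pos.2 (by exact_mod_cast hLL')
    have hterm : ∀ i ∈ Finset.Ioc L L', μ i t / μ 1 t ≤ ρhat * ε / ((L' : ℝ) - L) := by
      intro i hi
      obtain ⟨hiL, hiL'⟩ := Finset.mem_Ioc.1 hi
      have hpos : 0 < lam i :=
        ha.trans (hL'big.trans_le (hmono i L' (by omega) hiL' hL'n))
      have hle : μ i t ≤ μ (L + 1) t := by
        rw [hμpos i hpos, hμpos (L + 1) hlamL1, hg, hg]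
        exact flow_mono ha hpos ht (hmono (L + 1) i (by omega) hiL (by omega))
      calc μ i t / μ 1 t ≤ μ (L + 1) t / μ 1 t := div_le_div_of_nonneg_right hle hμ1.le
        _ = _ := hratio _ hlamL1
        _ ≤ _ := (le_abs_self _).trans h2.le
    refine (Finset.sum_le_sum hterm).trans_eq ?_
    rw [Finset.sum_const, Nat.card_Ioc, nsmul_eq_mul, Nat.cast_sub hLL'.le]
    field_simp
  have htail : ∑ i ∈ Finset.Ioc L' n, μ i t / μ 1 t ≤ C * ((n : ℝ) - L') * α ^ 2 / lam 1 := by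
    have hterm : ∀ i ∈ Finset.Ioc L' n, μ i t / μ 1 t ≤ C * α ^ 2 / lam 1 := by
      intro i hi
      obtain ⟨hiL', hin⟩ := Finset.mem_Ioc.1 hi
      have hsmall : lam i ≤ α ^ 2 := by
        by_contra! h
        have := hL'max i (by omega) hin h
        omega
      have hle : μ i t ≤ α ^ 2 := by
        by_cases hpos : 0 < lam i
        · rw [hμpos i hpos, hg]
          exact flow_le ha hpos ht hsmall
        · rw [hμ, if_neg hpos]
          exact inv_le_of_inv_le₀ ha (by linarith)
      calc μ i t / μ 1 t ≤ α ^ 2 / μ 1 t := div_le_div_of_nonneg_right hle hμ1.le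
        _ = g (lam 1) t * α ^ 2 / lam 1 := by rw [hμpos 1 hl1]; field_simp
        _ ≤ C * α ^ 2 / lam 1 := by gcongr
    refine (Finset.sum_le_sum hterm).trans_eq ?_
    rw [Finset.sum_const, Nat.card_Ioc, nsmul_eq_mul, Nat.cast_sub hL'n]
    ring
  have hmid0 : 0 ≤ ∑ i ∈ Finset.Ioc L L', μ i t / μ 1 t :=
    Finset.sum_nonneg fun i _ => div_nonneg (hμnn i) hμ1.le
  have htail0 : 0 ≤ ∑ i ∈ Finset.Ioc L' n, μ i t / μ 1 t :=
    Finset.sum_nonneg fun i _ => div_nonneg (hμnn i) hμ1.le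
  obtain ⟨hlo, hhi⟩ := abs_le.1 hhead
  rw [hρt, abs_le]
  constructor <;> linarith
end

section
/- Let d₁, d₂ be the perturbed gradient-descent sequences, and define Δ₁(k) = d₂(k) − d₁(k), Δ₂(k) = d₂(k)² − d₁(k)², and κ(k) = d₂(k)^{N−2}·(d₁(k)·d₂(k)^{N−1} − λ). Then for every k ∈ ℕ: (i) Δ₁(k+1) = (1 + η·κ(k))·Δ₁(k) and Δ₂(k+1) = (1 − η²·κ(k)²)·Δ₂(k). Consequently, if η·|κ(k)| < 1, then Δ₁(k+1) has the same sign as Δ₁(k), Δ₂(k+1) has the same sign as Δ₂(k), and |Δ₂(k+1)| ≤ |Δ₂(k)|; if moreover κ(k) < 0 and Δ₁(k) ≠ 0 then |Δ₁(k+1)| < |Δ₁(k)|, while if κ(k) > 0 and Δ₁(k) ≠ 0 then |Δ₁(k+1)| > |Δ₁(k)|. -/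
/-!
Since `d₂ ^ (N-1) = d₂ ^ (N-2) * d₂`, the gradient step is
`d₁ ↦ d₁ - ηκ d₂`, `d₂ ↦ d₂ - ηκ d₁`, a symmetric linear map once `κ` is fixed. It scales `d₂ - d₁`
by `1 + ηκ` and `d₂ + d₁` by `1 - ηκ`, hence `d₂² - d₁²` by `1 - (ηκ)²`. When `η|κ| < 1` all these
factors are positive, which preserves signs, and their position relative to `1` gives the
monotonicity of the absolute values.
-/

theorem real_sign_pos_mul {c : ℝ} (hc : 0 < c) (x : ℝ) :
    Real.sign (c * x) = Real.sign x := by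
  rcases lt_trichotomy x 0 with hx | rfl | hx
  · rw [Real.sign_of_neg hx, Real.sign_of_neg (mul_neg_of_pos_of_neg hc hx)]
  · rw [mul_zero]
  · rw [Real.sign_of_pos hx, Real.sign_of_pos (mul_pos hc hx)]

/-- **Difference dynamics under perturbed initialization.** With
`Δ₁(k) = d₂(k) − d₁(k)`, `Δ₂(k) = d₂(k)² − d₁(k)²` and
`κ(k) = d₂(k)^{N−2}(d₁(k) d₂(k)^{N−1} − λ)`, one has
`Δ₁(k+1) = (1 + ηκ(k)) Δ₁(k)` and `Δ₂(k+1) = (1 − η²κ(k)²) Δ₂(k)`; consequently, if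
`η|κ(k)| < 1` the signs are preserved, `|Δ₂|` does not increase, and `|Δ₁|` strictly
decreases (resp. increases) when `κ(k) < 0` (resp. `κ(k) > 0`) and `Δ₁(k) ≠ 0`. -/
theorem perturbed_difference_dynamics
    (N : ℕ) (hN : 2 ≤ N) (lam α β η : ℝ) (hβ : 0 < β) (hβα : β < α) (hη : 0 < η)
    (d₁ d₂ : ℕ → ℝ) (h10 : d₁ 0 = α - β) (h20 : d₂ 0 = α)
    (h1rec : ∀ k : ℕ, d₁ (k+1) = d₁ k - η * d₂ k ^ (N-1) * (d₁ k * d₂ k ^ (N-1) - lam))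
    (h2rec : ∀ k : ℕ, d₂ (k+1) = d₂ k - η * d₁ k * d₂ k ^ (N-2) * (d₁ k * d₂ k ^ (N-1) - lam)) :
    ∀ k : ℕ,
      (d₂ (k+1) - d₁ (k+1) =
        (1 + η * (d₂ k ^ (N-2) * (d₁ k * d₂ k ^ (N-1) - lam))) * (d₂ k - d₁ k) ∧
       d₂ (k+1)^2 - d₁ (k+1)^2 =
        (1 - η^2 * (d₂ k ^ (N-2) * (d₁ k * d₂ k ^ (N-1) - lam))^2) * (d₂ k ^2 - d₁ k ^2)) ∧
      (η * |d₂ k ^ (N-2) * (d₁ k * d₂ k ^ (N-1) - lam)| < 1 →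
        Real.sign (d₂ (k+1) - d₁ (k+1)) = Real.sign (d₂ k - d₁ k) ∧
        Real.sign (d₂ (k+1)^2 - d₁ (k+1)^2) = Real.sign (d₂ k ^2 - d₁ k ^2) ∧
        |d₂ (k+1)^2 - d₁ (k+1)^2| ≤ |d₂ k ^2 - d₁ k ^2| ∧
        (d₂ k ^ (N-2) * (d₁ k * d₂ k ^ (N-1) - lam) < 0 → d₂ k - d₁ k ≠ 0 →
          |d₂ (k+1) - d₁ (k+1)| < |d₂ k - d₁ k|) ∧
        (0 < d₂ k ^ (N-2) * (d₁ k * d₂ k ^ (N-1) - lam) → d₂ k - d₁ k ≠ 0 →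
          |d₂ k - d₁ k| < |d₂ (k+1) - d₁ (k+1)|)) := by
  intro k
  have hpow : d₂ k ^ (N-1) = d₂ k ^ (N-2) * d₂ k := by
    rw [← pow_succ]
    congr 1
    omega
  have e1 := h1rec k
  have e2 := h2rec k
  set κ := d₂ k ^ (N-2) * (d₁ k * d₂ k ^ (N-1) - lam) with hκ
  have s1 : d₁ (k+1) = d₁ k - η * κ * d₂ k := by
    rw [e1, hκ, hpow]
    ring
  have s2 : d₂ (k+1) = d₂ k - η * κ * d₁ k := by
    rw [e2, hκ]
    ring
  have f1 : d₂ (k+1) - d₁ (k+1) = (1 + η * κ) * (d₂ k - d₁ k) := by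
    rw [s1, s2]
    ring
  have f2 : d₂ (k+1)^2 - d₁ (k+1)^2 = (1 - η^2 * κ^2) * (d₂ k ^2 - d₁ k ^2) := by
    rw [s1, s2]
    ring
  refine ⟨⟨f1, f2⟩, fun h => ?_⟩
  have habs : |η * κ| < 1 := by rwa [abs_mul, abs_of_pos hη]
  have c1 : 0 < 1 + η * κ := by linarith [(abs_lt.mp habs).1]
  have c2 : 0 < 1 - η^2 * κ^2 := by
    have := (sq_lt_one_iff_abs_lt_one (η * κ)).mpr habs
    rw [mul_pow] at this
    linarith
  rw [f1, f2, abs_mul, abs_mul, abs_of_pos c1, abs_of_pos c2]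
  refine ⟨real_sign_pos_mul c1 _, real_sign_pos_mul c2 _, ?_, fun hneg hne => ?_,
    fun hpos hne => ?_⟩
  · exact mul_le_of_le_one_left (abs_nonneg _) (by linarith [mul_nonneg (sq_nonneg η) (sq_nonneg κ)])
  · exact mul_lt_of_lt_one_left (abs_pos.mpr hne) (by linarith [mul_neg_of_pos_of_neg hη hneg])
  · exact lt_mul_of_one_lt_left (abs_pos.mpr hne) (by linarith [mul_pos hη hpos])
end

section
/- Let N ≥ 2, λ < 0, 0 < β < α, and let d₁, d₂ be the perturbed gradient-descent sequences. Set M = max(α, |λ|^{1/N}). If 0 < η < 1/((3N−2)·M^{2N−2}), then there exists k ∈ ℕ with d₁(k) < 0; that is, the phase-transition time k₀ = inf{ k ∈ ℕ : d₁(k) < 0 } is finite. -/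
/-!
Suppose `d₁` never becomes negative. With `g = d₁ d₂^(N-1) - lam`, the gap satisfies
`d₂(k+1) - d₁(k+1) = (d₂ - d₁)(1 + η d₂^(N-2) g)`, so as long as `d₁ ≥ 0` the gap never drops
below its initial value `β`. Hence `d₂ ≥ β` and `g ≥ -lam > 0`, and every step lowers `d₁` by at
least the fixed amount `η β^(N-1) (-lam) > 0`, which is impossible for a nonnegative sequence.
-/


/-- **Finite phase-transition time for negative eigenvalues.** For `N ≥ 2`, `λ < 0`,
`0 < β < α` and small enough step size, the perturbed gradient-descent sequence `d₁`
eventually becomes negative, i.e. the phase-transition time `k₀ = inf{k : d₁(k) < 0}`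
is finite. -/
theorem perturbed_phase_transition_finite
    (N : ℕ) (hN : 2 ≤ N) (lam α β η : ℝ) (hlam : lam < 0) (hβ : 0 < β) (hβα : β < α)
    (d₁ d₂ : ℕ → ℝ) (h10 : d₁ 0 = α - β) (h20 : d₂ 0 = α)
    (h1rec : ∀ k : ℕ, d₁ (k+1) = d₁ k - η * d₂ k ^ (N-1) * (d₁ k * d₂ k ^ (N-1) - lam))
    (h2rec : ∀ k : ℕ, d₂ (k+1) = d₂ k - η * d₁ k * d₂ k ^ (N-2) * (d₁ k * d₂ k ^ (N-1) - lam))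
    (M : ℝ) (hM : M = max α (|lam| ^ ((1:ℝ)/N)))
    (hη0 : 0 < η)
    (hη : η < 1 / (((3*N - 2 : ℕ) : ℝ) * M ^ (2*N - 2))) :
    ∃ k : ℕ, d₁ k < 0 := by
  by_contra! hx
  obtain ⟨n, rfl⟩ : ∃ n, N = n + 2 := ⟨N - 2, by omega⟩
  simp only [Nat.add_sub_cancel, show n + 2 - 1 = n + 1 by omega] at h1rec h2rec
  have gap : ∀ k, β ≤ d₂ k - d₁ k := by
    intro k
    induction k with
    | zero => rw [h10, h20]; linarith
    | succ k ih =>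
      have hy : 0 < d₂ k := by linarith [hx k]
      have hg : 0 ≤ d₁ k * d₂ k ^ (n + 1) - lam := by
        have := mul_nonneg (hx k) (pow_pos hy (n + 1)).le
        linarith
      have hfac : 0 ≤ (d₂ k - d₁ k) * (η * d₂ k ^ n * (d₁ k * d₂ k ^ (n + 1) - lam)) :=
        mul_nonneg (by linarith) (mul_nonneg (by positivity) hg)
      have heq : d₂ (k + 1) - d₁ (k + 1) = (d₂ k - d₁ k)
          + (d₂ k - d₁ k) * (η * d₂ k ^ n * (d₁ k * d₂ k ^ (n + 1) - lam)) := by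
        rw [h1rec, h2rec]; ring
      linarith
  set c := η * β ^ (n + 1) * (-lam) with hc
  have hcpos : 0 < c := mul_pos (by positivity) (by linarith)
  have step : ∀ k, d₁ (k + 1) ≤ d₁ k - c := by
    intro k
    have hy : β ≤ d₂ k := by linarith [hx k, gap k]
    have hpow : β ^ (n + 1) ≤ d₂ k ^ (n + 1) := pow_le_pow_left₀ hβ.le hy _
    have hg : -lam ≤ d₁ k * d₂ k ^ (n + 1) - lam := by
      have := mul_nonneg (hx k) (pow_pos (hβ.trans_le hy) (n + 1)).le
      linarith
    have : c ≤ η * d₂ k ^ (n + 1) * (d₁ k * d₂ k ^ (n + 1) - lam) := by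
      have hl : 0 ≤ -lam := by linarith
      have hd : 0 ≤ d₂ k := by linarith
      rw [hc]
      exact mul_le_mul (mul_le_mul_of_nonneg_left hpow hη0.le) hg hl (by positivity)
    rw [h1rec]
    linarith
  have lin : ∀ k : ℕ, d₁ k ≤ d₁ 0 - k * c := by
    intro k
    induction k with
    | zero => simp
    | succ k ih => push_cast; linarith [step k]
  obtain ⟨k, hk⟩ := exists_nat_gt (d₁ 0 / c)
  rw [div_lt_iff₀ hcpos] at hk
  linarith [lin k, hx k]
end

section
/- Let N ≥ 2, λ ∈ ℝ, 0 < β < α, and let d₁, d₂ be the perturbed gradient-descent sequences. Set M = max(α, |λ|^{1/N}) and let c ∈ (1,2) be the maximal real solution of the equation 1 = (c−1)·c^{N−1}. If 0 < η < 1/(9N·(cM)^{2N−2}), then d₁(k)·d₂(k)^{N−1} → λ as k → ∞. -/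
/-!
Write `s = η d₂^(N-2) r`, where `r = d₁ d₂^(N-1) - λ` is the residual. One step of the recursion is
`d₁ ↦ d₁ - s d₂`, `d₂ ↦ d₂ - s d₁`, so `d₂ - d₁` is multiplied by `1 + s` and `d₂ + d₁` by
`1 - s`. As long as `|s| < 1` both stay positive, i.e. `|d₁| < d₂`.

Factoring the difference of powers `d₂(k+1)^(N-1) - d₂(k)^(N-1)` shows that the residual is
multiplied by exactly `1 - q`, where `q = η d₂^(N-2) (d₂ d₂⁺^(N-1) + d₁² ∑ⱼ d₂⁺ʲ d₂^(N-2-j)) ≥ 0`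
and `d₂⁺` is the next value of `d₂`. While `d₂ ≤ cM` the step-size condition gives `q ≤ 1`, so the
residual keeps its sign and does not grow (`gd_step`). Hence `d₂ + d₁` (if `r ≤ 0`) or `d₂ - d₁`
(if `r ≥ 0`) never drops below its initial value, which is at least `β`. Therefore
`d₂ ≥ β / 2`, `q` is bounded below by a positive constant, and the residual decays geometrically.

The bound `d₂ ≤ cM` is preserved because of the equation for `c`: if the other one of `d₂ ∓ d₁` is
at most `M`, then `d₂ > cM` forces `|d₁| > (c - 1) M` with the sign of `-r`, so
`|d₁ d₂^(N-1)| > (c - 1) c^(N-1) M^N = M^N ≥ |λ|`, contradicting the sign of `r`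
(`le_of_prod_le`).
-/

/-- One step of the recursion with `N = n + 2`, from a state `(a, b)` with `|a| < b ≤ B`. -/
lemma gd_step (n : ℕ) (lam η B a b a' b' : ℝ) (hη0 : 0 < η)
    (hab : a < b) (hab' : -a < b) (hbB : b ≤ B) (hlam : |lam| ≤ B ^ (n+2))
    (hη : η * (9 * ((n:ℝ)+2) * B ^ (2*n+2)) < 1)
    (ha' : a' = a - η * b ^ (n+1) * (a * b ^ (n+1) - lam))
    (hb' : b' = b - η * a * b ^ n * (a * b ^ (n+1) - lam)) :
    a' < b' ∧ -a' < b' ∧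
    b' - a' = (b - a) * (1 + η * b ^ n * (a * b ^ (n+1) - lam)) ∧
    b' + a' = (b + a) * (1 - η * b ^ n * (a * b ^ (n+1) - lam)) ∧
    ∃ q : ℝ, η * b ^ (n+1) * b' ^ (n+1) ≤ q ∧ q ≤ 1 ∧
      a' * b' ^ (n+1) - lam = (1 - q) * (a * b ^ (n+1) - lam) := by
  have hb : 0 < b := by linarith
  have hB : 0 < B := by linarith
  have habs : |a| ≤ b := abs_le.2 ⟨by linarith, hab.le⟩
  set r := a * b ^ (n+1) - lam with hr
  set s := η * b ^ n * r with hs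
  have hn : (0:ℝ) ≤ n := Nat.cast_nonneg n
  have hrB : |r| ≤ 2 * B ^ (n+2) := by
    have h1 : |a * b ^ (n+1)| ≤ B ^ (n+2) := by
      rw [abs_mul, abs_of_pos (pow_pos hb (n+1))]
      calc |a| * b ^ (n+1) ≤ b * b ^ (n+1) := by gcongr
        _ = b ^ (n+2) := by ring
        _ ≤ B ^ (n+2) := by gcongr
    have := abs_sub (a * b ^ (n+1)) lam
    linarith
  have hsB : |s| ≤ 2 * (η * B ^ (2*n+2)) := by
    rw [hs, abs_mul, abs_of_pos (by positivity)]
    calc η * b ^ n * |r| ≤ η * B ^ n * (2 * B ^ (n+2)) := by gcongr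
      _ = _ := by ring
  set w := η * B ^ (2*n+2) with hw
  have hw0 : 0 < w := by positivity
  have hw1 : w * (9 * ((n:ℝ)+2)) < 1 := by rw [hw]; linarith
  have hs1 : |s| * ((n:ℝ)+2) ≤ 2/9 := by nlinarith
  have hs2 : |s| ≤ 1/9 := by nlinarith [abs_nonneg s]
  obtain ⟨hsl, hsu⟩ := abs_le.1 hs2
  have ea : a' = a - s * b := by rw [ha', hs]; ring
  have eb : b' = b - s * a := by rw [hb', hs]; ring
  have ex : b' - a' = (b - a) * (1 + s) := by rw [ea, eb]; ring
  have ey : b' + a' = (b + a) * (1 - s) := by rw [ea, eb]; ring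
  have px : 0 < b' - a' := by rw [ex]; apply mul_pos <;> linarith
  have py : 0 < b' + a' := by rw [ey]; apply mul_pos <;> linarith
  have hb'0 : 0 < b' := by linarith
  have hb'u : b' ≤ b * (1 + |s|) := by
    have : |s * a| ≤ |s| * b := by rw [abs_mul]; gcongr
    have := neg_abs_le (s * a)
    rw [eb]; linarith
  -- `|s| ≤ 2 / (9 N)` keeps the accumulated growth `(1 + |s|) ^ j` below `e < 3` for `j < N`.
  have hpow : ∀ j : ℕ, j ≤ n+1 → b' ^ j ≤ 3 * b ^ j := by
    intro j hj
    have hj' : (j:ℝ) ≤ n + 1 := by exact_mod_cast hj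
    have h1 : (1 + |s|) ^ j ≤ 3 := by
      calc (1 + |s|) ^ j ≤ (Real.exp |s|) ^ j := by
            gcongr; linarith [Real.add_one_le_exp |s|]
        _ = Real.exp (j * |s|) := by rw [← Real.exp_nat_mul]
        _ ≤ Real.exp 1 := by
            apply Real.exp_le_exp.2
            nlinarith [abs_nonneg s]
        _ ≤ 3 := by linarith [Real.exp_one_lt_d9]
    calc b' ^ j ≤ (b * (1 + |s|)) ^ j := by gcongr
      _ = (1 + |s|) ^ j * b ^ j := by rw [mul_pow, mul_comm]
      _ ≤ 3 * b ^ j := by gcongr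
  set S := ∑ j ∈ Finset.range (n+1), b' ^ j * b ^ (n + 1 - 1 - j) with hS
  have hgeom : S * (b' - b) = b' ^ (n+1) - b ^ (n+1) := by
    rw [hS]; exact (Commute.all b' b).geom_sum₂_mul (n+1)
  have hS0 : 0 ≤ S := Finset.sum_nonneg fun j _ => by positivity
  have hSu : S ≤ ((n:ℝ)+1) * (3 * b ^ n) := by
    have : ∀ j ∈ Finset.range (n+1), b' ^ j * b ^ (n + 1 - 1 - j) ≤ 3 * b ^ n := by
      intro j hj
      have hj := Finset.mem_range.1 hj
      calc b' ^ j * b ^ (n + 1 - 1 - j) ≤ (3 * b ^ j) * b ^ (n + 1 - 1 - j) := by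
            gcongr; exact hpow j hj.le
        _ = 3 * b ^ n := by
            rw [mul_assoc, ← pow_add]; congr 2; omega
    have h := Finset.sum_le_card_nsmul _ _ _ this
    simpa [hS] using h
  refine ⟨by linarith, by linarith, ex, ey,
    η * b ^ n * (b * b' ^ (n+1) + a ^ 2 * S), ?_, ?_, ?_⟩
  · have : 0 ≤ η * b ^ n * (a ^ 2 * S) := by positivity
    calc _ ≤ η * b ^ (n+1) * b' ^ (n+1) + η * b ^ n * (a ^ 2 * S) := by linarith
      _ = _ := by ring
  · have ha2 : a ^ 2 ≤ b ^ 2 := sq_le_sq' (by linarith) hab.le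
    calc η * b ^ n * (b * b' ^ (n+1) + a ^ 2 * S)
        ≤ η * b ^ n * (b * (3 * b ^ (n+1)) + b ^ 2 * (((n:ℝ)+1) * (3 * b ^ n))) := by
          gcongr; exact hpow _ le_rfl
      _ = 3 * ((n:ℝ)+2) * (η * b ^ (2*n+2)) := by ring
      _ ≤ 3 * ((n:ℝ)+2) * w := by rw [hw]; gcongr
      _ ≤ 1 := by nlinarith
  · have e2 : b' ^ (n+1) = b ^ (n+1) - S * (s * a) := by
      have : b' - b = - (s * a) := by rw [eb]; ring
      rw [this] at hgeom; linarith
    have : a' * b' ^ (n+1) = a * b ^ (n+1) - s * (b * b' ^ (n+1) + a ^ 2 * S) := by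
      rw [ea]; linear_combination a * e2
    rw [this, hs, hr]; ring

/-- The defining equation of `c` turns a bound on the product `a b ^ (N - 1)` and on `b - a` into
the bound `c M` on `b`. -/
lemma le_of_prod_le (n : ℕ) (M c a b : ℝ) (hM : 0 < M) (hc : 1 < c)
    (hcs : 1 = (c - 1) * c ^ (n+1)) (hx : b - a ≤ M) (hp : a * b ^ (n+1) ≤ M ^ (n+2)) :
    b ≤ c * M := by
  by_contra! h
  have h1 : (c - 1) * M < a := by linarith
  have h2 : 0 < (c - 1) * M := mul_pos (by linarith) hM
  have h3 : 0 < c * M := mul_pos (by linarith) hM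
  have : (c - 1) * M * (c * M) ^ (n+1) < a * b ^ (n+1) := by
    apply mul_lt_mul h1 (by gcongr) (by positivity) (by linarith)
  have e : (c - 1) * M * (c * M) ^ (n+1) = M ^ (n+2) := by
    rw [mul_pow]; linear_combination (-M ^ (n+2)) * hcs
  linarith

lemma tendsto_of_contract (u : ℕ → ℝ) (lam ε : ℝ) (hε : 0 < ε) (hε1 : ε ≤ 1)
    (h : ∀ k, |u (k+1) - lam| ≤ (1 - ε) * |u k - lam|) :
    Filter.Tendsto u Filter.atTop (nhds lam) := by
  have hk : ∀ k, |u k - lam| ≤ (1 - ε) ^ k * |u 0 - lam| := by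
    intro k
    induction k with
    | zero => simp
    | succ k ih =>
      calc _ ≤ _ := h k
        _ ≤ (1 - ε) * ((1 - ε) ^ k * |u 0 - lam|) :=
          mul_le_mul_of_nonneg_left ih (by linarith)
        _ = _ := by ring
  rw [tendsto_iff_norm_sub_tendsto_zero]
  refine squeeze_zero (fun k => norm_nonneg _) hk ?_
  simpa using (tendsto_pow_atTop_nhds_zero_of_lt_one (by linarith) (by linarith)).mul_const
    |u 0 - lam|

/-- **Convergence of the product under perturbed initialization.** For `N ≥ 2`, any
`λ ∈ ℝ`, `0 < β < α`, with `M = max(α, |λ|^{1/N})`, `c ∈ (1,2)` the maximal real solution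
of `1 = (c−1)c^{N−1}`, and `0 < η < 1/(9N(cM)^{2N−2})`, the product
`d₁(k) d₂(k)^{N−1}` converges to `λ`. -/
theorem perturbed_product_converges
    (N : ℕ) (hN : 2 ≤ N) (lam α β η : ℝ) (hβ : 0 < β) (hβα : β < α)
    (d₁ d₂ : ℕ → ℝ) (h10 : d₁ 0 = α - β) (h20 : d₂ 0 = α)
    (h1rec : ∀ k : ℕ, d₁ (k+1) = d₁ k - η * d₂ k ^ (N-1) * (d₁ k * d₂ k ^ (N-1) - lam))
    (h2rec : ∀ k : ℕ, d₂ (k+1) = d₂ k - η * d₁ k * d₂ k ^ (N-2) * (d₁ k * d₂ k ^ (N-1) - lam))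
    (M : ℝ) (hM : M = max α (|lam| ^ ((1:ℝ)/N)))
    (c : ℝ) (hc : c ∈ Set.Ioo (1:ℝ) 2)
    (hcsol : 1 = (c - 1) * c ^ (N - 1))
    (hcmax : ∀ c' : ℝ, 1 = (c' - 1) * c' ^ (N - 1) → c' ≤ c)
    (hη0 : 0 < η)
    (hη : η < 1 / (9 * (N:ℝ) * (c * M) ^ (2*N - 2))) :
    Filter.Tendsto (fun k => d₁ k * d₂ k ^ (N-1)) Filter.atTop (nhds lam) := by
  obtain ⟨hc1, -⟩ := hc
  have hαM : α ≤ M := hM ▸ le_max_left _ _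
  have hM0 : 0 < M := by linarith
  have hlamM : |lam| ≤ M ^ N := by
    have h1 : |lam| ^ ((1:ℝ)/N) ≤ M := hM ▸ le_max_right _ _
    calc |lam| = (|lam| ^ ((1:ℝ)/N)) ^ N := by
          rw [one_div, Real.rpow_inv_natCast_pow (abs_nonneg _) (by omega)]
      _ ≤ M ^ N := by gcongr
  obtain ⟨n, rfl⟩ : ∃ n, N = n + 2 := ⟨N - 2, by omega⟩
  simp only [show n + 2 - 1 = n + 1 by omega, show n + 2 - 2 = n by omega,
    show 2 * (n + 2) - 2 = 2 * n + 2 by omega] at *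
  set B := c * M with hB
  have hMB : M ≤ B := by nlinarith
  have hB0 : 0 < B := by linarith
  have hlamB : |lam| ≤ B ^ (n+2) := hlamM.trans (by gcongr)
  have hη' : η * (9 * ((n:ℝ)+2) * B ^ (2*n+2)) < 1 := by
    rw [lt_div_iff₀ (by positivity)] at hη
    push_cast at hη; exact hη
  obtain ⟨hl1, hl2⟩ := abs_le.1 hlamM
  have hstep := fun k (h1 : d₁ k < d₂ k) (h2 : -d₁ k < d₂ k) (h3 : d₂ k ≤ B) =>
    gd_step n lam η B (d₁ k) (d₂ k) (d₁ (k+1)) (d₂ (k+1)) hη0 h1 h2 h3 hlamB hη'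
      (h1rec k) (h2rec k)
  -- The residual keeps its initial sign, and the invariants behind these bounds depend on that sign.
  have key : ∀ k, d₁ k < d₂ k ∧ -d₁ k < d₂ k ∧ d₂ k ≤ B ∧ β / 2 ≤ d₂ k := by
    rcases le_total (d₁ 0 * d₂ 0 ^ (n+1) - lam) 0 with h0 | h0
    · have inv : ∀ k, d₁ k < d₂ k ∧ -d₁ k < d₂ k ∧ d₂ k ≤ B ∧
          d₁ k * d₂ k ^ (n+1) - lam ≤ 0 ∧ d₂ k - d₁ k ≤ M ∧ β ≤ d₂ k + d₁ k := by
        intro k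
        induction k with
        | zero => refine ⟨?_, ?_, ?_, h0, ?_, ?_⟩ <;> rw [h20] <;> (try rw [h10]) <;> linarith
        | succ k ih =>
          obtain ⟨i1, i2, i3, i4, i5, i6⟩ := ih
          obtain ⟨s1, s2, sx, sy, q, hq, hq1, hr⟩ := hstep k i1 i2 i3
          have hb : 0 < d₂ k := by linarith
          have hs : η * d₂ k ^ n * (d₁ k * d₂ k ^ (n+1) - lam) ≤ 0 :=
            mul_nonpos_of_nonneg_of_nonpos (by positivity) i4
          have r4 : d₁ (k+1) * d₂ (k+1) ^ (n+1) - lam ≤ 0 := by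
            rw [hr]; exact mul_nonpos_of_nonneg_of_nonpos (by linarith) i4
          have r5 : d₂ (k+1) - d₁ (k+1) ≤ M := by rw [sx]; nlinarith
          have r6 : β ≤ d₂ (k+1) + d₁ (k+1) := by rw [sy]; nlinarith
          exact ⟨s1, s2, le_of_prod_le n M c _ _ hM0 hc1 hcsol r5 (by linarith), r4, r5, r6⟩
      intro k
      obtain ⟨i1, i2, i3, i4, i5, i6⟩ := inv k
      exact ⟨i1, i2, i3, by linarith⟩
    · -- Here `d₂ + d₁` may start above `M`, but `d₂ ≤ M` persists until `d₁` turns negative,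
      -- and from then on `d₂ + d₁ ≤ M`.
      have inv : ∀ k, d₁ k < d₂ k ∧ -d₁ k < d₂ k ∧ d₂ k ≤ B ∧
          0 ≤ d₁ k * d₂ k ^ (n+1) - lam ∧ (d₂ k ≤ M ∨ d₂ k + d₁ k ≤ M) ∧
          β ≤ d₂ k - d₁ k := by
        intro k
        induction k with
        | zero =>
          refine ⟨?_, ?_, ?_, h0, Or.inl ?_, ?_⟩ <;> rw [h20] <;> (try rw [h10]) <;> linarith
        | succ k ih =>
          obtain ⟨i1, i2, i3, i4, i5, i6⟩ := ih
          obtain ⟨s1, s2, sx, sy, q, hq, hq1, hr⟩ := hstep k i1 i2 i3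
          have hb : 0 < d₂ k := by linarith
          have hs : 0 ≤ η * d₂ k ^ n * (d₁ k * d₂ k ^ (n+1) - lam) :=
            mul_nonneg (by positivity) i4
          have r4 : 0 ≤ d₁ (k+1) * d₂ (k+1) ^ (n+1) - lam := by
            rw [hr]; exact mul_nonneg (by linarith) i4
          have r6 : β ≤ d₂ (k+1) - d₁ (k+1) := by rw [sx]; nlinarith
          have ymono : d₂ (k+1) + d₁ (k+1) ≤ d₂ k + d₁ k := by rw [sy]; nlinarith
          have r5 : d₂ (k+1) ≤ M ∨ d₂ (k+1) + d₁ (k+1) ≤ M := by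
            rcases i5 with i5 | i5
            · rcases le_total 0 (d₁ k) with hd | hd
              · left
                have : 0 ≤ η * d₂ k ^ n * (d₁ k * d₂ k ^ (n+1) - lam) * d₁ k := mul_nonneg hs hd
                rw [h2rec k]; linarith
              · right; linarith
            · right; linarith
          refine ⟨s1, s2, ?_, r4, r5, r6⟩
          rcases r5 with r5 | r5
          · linarith
          · exact le_of_prod_le n M c (-d₁ (k+1)) _ hM0 hc1 hcsol (by linarith) (by linarith)
      intro k
      obtain ⟨i1, i2, i3, i4, i5, i6⟩ := inv k
      exact ⟨i1, i2, i3, by linarith⟩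
  have hq : ∀ k, ∃ q : ℝ, η * (β/2) ^ (n+1) * (β/2) ^ (n+1) ≤ q ∧ q ≤ 1 ∧
      d₁ (k+1) * d₂ (k+1) ^ (n+1) - lam = (1 - q) * (d₁ k * d₂ k ^ (n+1) - lam) := by
    intro k
    obtain ⟨i1, i2, i3, i4⟩ := key k
    obtain ⟨-, -, -, j4⟩ := key (k+1)
    obtain ⟨-, -, -, -, q, hq, hq1, hr⟩ := hstep k i1 i2 i3
    have hb : 0 < d₂ k := by linarith
    exact ⟨q, le_trans (by gcongr) hq, hq1, hr⟩
  refine tendsto_of_contract _ lam (η * (β/2) ^ (n+1) * (β/2) ^ (n+1)) (by positivity) ?_ ?_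
  · obtain ⟨q, h1, h2, -⟩ := hq 0
    exact h1.trans h2
  · intro k
    obtain ⟨q, h1, h2, h3⟩ := hq k
    simp only [h3, abs_mul]
    rw [abs_of_nonneg (by linarith : 0 ≤ 1 - q)]
    gcongr
end

section
/- Let N ≥ 2, λ > 0, 0 < β < α with (α−β)·α^{N−1} ≤ λ, and let d₁, d₂ be the perturbed gradient-descent sequences. Set M = max(α, λ^{1/N}) and let c ∈ (1,2) be the maximal real solution of the equation 1 = (c−1)·c^{N−1}. If 0 < η < 1/(8N·(cM)^{2N−2}), then for all k ∈ ℕ one has 0 < d₁(k)·d₂(k)^{N−1} ≤ λ and d₂(k) ≤ c·M, and moreover d₁(k)·d₂(k)^{N−1} → λ as k → ∞. -/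
/-!
Write `x = d₁ k`, `y = d₂ k`, `N = n + 2`, let `r = lam - x * y ^ (N - 1)` be the residual and put
`u = η * r * y ^ (N - 2)`. One step of the dynamics is the linear map `(x, y) ↦ (x + u y, y + u x)`.
Hence, as long as `0 ≤ u ≤ 1`, both coordinates increase while the gap `y - x` is multiplied by
`1 - u`, so that it stays in `[0, β]`.

* The step-size condition gives `N * u ≤ 1 / 8`, so Bernoulli's inequality bounds the increase of
  the product by `2 N u y ^ N = 2 N η y ^ (2 N - 2) r ≤ r / 4`: the product never overshoots `lam`
  (`product_increment_le`).
* If `y > c M`, then `x ≥ y - β > (c - 1) M`, so the product would exceed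
  `(c - 1) c ^ (N - 1) M ^ N = M ^ N ≥ lam`. Thus `y ≤ c M` is a consequence of the gap bound and
  of the absence of overshooting (`le_mul_of_gap_le`).
* The product increases by at least `u y ^ N = η y ^ (2 N - 2) r ≥ η α ^ (2 N - 2) r`
  (`le_product_increment`), so the residual decays geometrically.
-/

/-- A reverse Bernoulli inequality, valid for small increments. -/
lemma one_add_pow_le_one_add_two_mul (u : ℝ) (hu : 0 ≤ u) (m : ℕ) (h : 2 * m * u ≤ 1) :
    (1 + u) ^ m ≤ 1 + 2 * m * u := by
  induction m with
  | zero => simp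
  | succ m ih =>
    push_cast at h ⊢
    have ih' := ih (by linarith)
    calc (1 + u) ^ (m + 1) = (1 + u) ^ m * (1 + u) := pow_succ _ _
      _ ≤ (1 + 2 * m * u) * (1 + u) := by gcongr
      _ ≤ 1 + 2 * (m + 1) * u := by nlinarith

/-- The linear step `(x, y) ↦ (x + u y, y + u x)` increases `x * y ^ (n + 1)` by at most
`2 (n + 2) u y ^ (n + 2)`. -/
lemma product_increment_le (n : ℕ) (x y u : ℝ) (hx : 0 ≤ x) (hxy : x ≤ y) (hu : 0 ≤ u)
    (hun : 8 * (n + 2) * u ≤ 1) :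
    (x + u * y) * (y + u * x) ^ (n + 1) - x * y ^ (n + 1) ≤ 2 * (n + 2) * u * y ^ (n + 2) := by
  have hy : 0 ≤ y := hx.trans hxy
  have hn : (0 : ℝ) ≤ n := n.cast_nonneg
  have hnu : 0 ≤ n * u := by positivity
  have hB := one_add_pow_le_one_add_two_mul u hu (n + 1) (by push_cast; nlinarith)
  push_cast at hB
  have h1 : (y + u * x) ^ (n + 1) ≤ y ^ (n + 1) * (1 + 2 * (n + 1) * u) := by
    calc (y + u * x) ^ (n + 1) ≤ (y * (1 + u)) ^ (n + 1) := by
          gcongr; nlinarith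
      _ = y ^ (n + 1) * (1 + u) ^ (n + 1) := mul_pow _ _ _
      _ ≤ _ := by gcongr
  have h2 : (x + u * y) * (y + u * x) ^ (n + 1)
      ≤ (x + u * y) * (y ^ (n + 1) * (1 + 2 * (n + 1) * u)) := by gcongr
  have h3 : x * (y ^ (n + 1) * (2 * (n + 1) * u)) ≤ y * (y ^ (n + 1) * (2 * (n + 1) * u)) := by
    gcongr
  have h4 : u * y * y ^ (n + 1) * (2 * (n + 1) * u) ≤ u * y * y ^ (n + 1) * 1 := by
    gcongr; nlinarith
  have h5 : 0 ≤ u * y * y ^ (n + 1) := by positivity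
  have h6 : y ^ (n + 2) = y * y ^ (n + 1) := pow_succ' _ _
  rw [h6]
  nlinarith

lemma le_product_increment (n : ℕ) (x y u : ℝ) (hx : 0 ≤ x) (hy : 0 ≤ y) (hu : 0 ≤ u) :
    u * y ^ (n + 2) ≤ (x + u * y) * (y + u * x) ^ (n + 1) - x * y ^ (n + 1) := by
  have h1 : y ^ (n + 1) ≤ (y + u * x) ^ (n + 1) := by
    gcongr; nlinarith [mul_nonneg hu hx]
  have h2 : (x + u * y) * y ^ (n + 1) ≤ (x + u * y) * (y + u * x) ^ (n + 1) := by gcongr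
  have h6 : y ^ (n + 2) = y * y ^ (n + 1) := pow_succ' _ _
  rw [h6]
  linarith

/-- The equation defining `c` says exactly that the point with `y = c M` and gap `M` has
product `M ^ (n + 2)`; a larger `y` with a gap at most `M` has a larger product. -/
lemma le_mul_of_gap_le (n : ℕ) (x y lam M c : ℝ) (hM : 0 < M) (hc : 1 < c)
    (hcsol : 1 = (c - 1) * c ^ (n + 1)) (hlam : lam ≤ M ^ (n + 2)) (hgap : y - x ≤ M)
    (hprod : x * y ^ (n + 1) ≤ lam) : y ≤ c * M := by
  by_contra! hy
  have hx : (c - 1) * M < x := by linarith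
  have hc' : 0 < c - 1 := by linarith
  have h1 : ((c - 1) * M) * (c * M) ^ (n + 1) < x * y ^ (n + 1) := by gcongr
  have h2 : ((c - 1) * M) * (c * M) ^ (n + 1) = ((c - 1) * c ^ (n + 1)) * M ^ (n + 2) := by
    rw [mul_pow]; ring
  rw [h2, ← hcsol] at h1
  linarith

/-- The properties of a pair `(x, y)` of iterates that one gradient step preserves; `K` is the
upper bound for `y`. -/
structure Good (n : ℕ) (lam α β K x y : ℝ) : Prop where
  x_pos : 0 < x
  le_y : α ≤ y
  x_le_y : x ≤ y
  gap : y - x ≤ β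
  prod : x * y ^ (n + 1) ≤ lam
  y_le : y ≤ K

/-- One gradient step preserves `Good` and contracts the residual by a fixed factor. -/
lemma Good.step {n : ℕ} {lam α β η M c x y : ℝ} (h : Good n lam α β (c * M) x y)
    (hα : 0 < α) (hβM : β ≤ M) (hM : 0 < M) (hc : 1 < c)
    (hcsol : 1 = (c - 1) * c ^ (n + 1)) (hlam : lam ≤ M ^ (n + 2)) (hη : 0 < η)
    (hηK : 8 * (n + 2) * (η * (c * M) ^ (2 * n + 2)) ≤ 1) :
    Good n lam α β (c * M) (x - η * y ^ (n + 1) * (x * y ^ (n + 1) - lam))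
      (y - η * x * y ^ n * (x * y ^ (n + 1) - lam)) ∧
    lam - (x - η * y ^ (n + 1) * (x * y ^ (n + 1) - lam)) *
        (y - η * x * y ^ n * (x * y ^ (n + 1) - lam)) ^ (n + 1)
      ≤ (1 - η * α ^ (2 * n + 2)) * (lam - x * y ^ (n + 1)) := by
  obtain ⟨hx, hαy, hxy, hgap, hprod, hyK⟩ := h
  have hy : 0 < y := by linarith
  have hr : 0 ≤ lam - x * y ^ (n + 1) := by linarith
  obtain ⟨r, hr_def⟩ : ∃ r, r = lam - x * y ^ (n + 1) := ⟨_, rfl⟩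
  obtain ⟨u, hu_def⟩ : ∃ u, u = η * r * y ^ n := ⟨_, rfl⟩
  have hr0 : 0 ≤ r := by rw [hr_def]; exact hr
  have hx' : x - η * y ^ (n + 1) * (x * y ^ (n + 1) - lam) = x + u * y := by
    rw [hu_def, hr_def]; ring
  have hy' : y - η * x * y ^ n * (x * y ^ (n + 1) - lam) = y + u * x := by
    rw [hu_def, hr_def]; ring
  rw [hx', hy', ← hr_def]
  have hu : 0 ≤ u := by rw [hu_def]; positivity
  have hK : 0 < c * M := by positivity
  have hrK : r ≤ (c * M) ^ (n + 2) := by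
    have h1 : M ^ (n + 2) ≤ (c * M) ^ (n + 2) := by gcongr; nlinarith
    have h2 : 0 < x * y ^ (n + 1) := by positivity
    linarith
  have huK : u ≤ η * (c * M) ^ (2 * n + 2) := by
    calc u = η * r * y ^ n := hu_def
      _ ≤ η * (c * M) ^ (n + 2) * (c * M) ^ n := by gcongr
      _ = η * (c * M) ^ (2 * n + 2) := by ring
  have hun : 8 * (n + 2) * u ≤ 1 := le_trans (by gcongr) hηK
  have hn : (0 : ℝ) ≤ n := n.cast_nonneg
  have hu1 : u ≤ 1 := by nlinarith [mul_nonneg hn hu]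
  have huy : u * y ^ (n + 2) = η * y ^ (2 * n + 2) * r := by rw [hu_def]; ring
  have hup := product_increment_le n x y u hx.le hxy hu hun
  have hlow := le_product_increment n x y u hx.le hy.le hu
  rw [huy] at hlow
  have hup' : 2 * (n + 2) * u * y ^ (n + 2) ≤ r := by
    have h1 : 8 * (n + 2) * (η * y ^ (2 * n + 2)) ≤ 1 := le_trans (by gcongr) hηK
    have h2 : 8 * (n + 2) * (η * y ^ (2 * n + 2)) * r ≤ 1 * r := by gcongr
    rw [mul_assoc, huy]
    linarith
  have hprod' : (x + u * y) * (y + u * x) ^ (n + 1) ≤ lam := by linarith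
  have hgap' : (y + u * x) - (x + u * y) ≤ β := by nlinarith [mul_nonneg hu (sub_nonneg.2 hxy)]
  refine ⟨⟨by positivity, ?_, ?_, hgap', hprod', ?_⟩, ?_⟩
  · nlinarith [mul_nonneg hu hx.le]
  · nlinarith [mul_nonneg (sub_nonneg.2 hu1) (sub_nonneg.2 hxy)]
  · exact le_mul_of_gap_le n _ _ lam M c hM hc hcsol hlam (hgap'.trans hβM) hprod'
  · have h1 : η * α ^ (2 * n + 2) * r ≤ η * y ^ (2 * n + 2) * r := by gcongr
    linarith


/-- **Perturbed dynamics, large positive eigenvalue.** For `N ≥ 2`, `λ > 0`,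
`0 < β < α` with `(α−β)α^{N−1} ≤ λ`, `M = max(α, λ^{1/N})`, `c ∈ (1,2)` the maximal real
solution of `1 = (c−1)c^{N−1}`, and `0 < η < 1/(8N(cM)^{2N−2})`, the iterates satisfy
`0 < d₁(k) d₂(k)^{N−1} ≤ λ` and `d₂(k) ≤ cM` for all `k`, and the product converges
to `λ`. -/
theorem perturbed_product_large_positive_lambda
    (N : ℕ) (hN : 2 ≤ N) (lam α β η : ℝ) (hlam : 0 < lam) (hβ : 0 < β) (hβα : β < α)
    (hinit : (α - β) * α ^ (N-1) ≤ lam)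
    (d₁ d₂ : ℕ → ℝ) (h10 : d₁ 0 = α - β) (h20 : d₂ 0 = α)
    (h1rec : ∀ k : ℕ, d₁ (k+1) = d₁ k - η * d₂ k ^ (N-1) * (d₁ k * d₂ k ^ (N-1) - lam))
    (h2rec : ∀ k : ℕ, d₂ (k+1) = d₂ k - η * d₁ k * d₂ k ^ (N-2) * (d₁ k * d₂ k ^ (N-1) - lam))
    (M : ℝ) (hM : M = max α (lam ^ ((1:ℝ)/N)))
    (c : ℝ) (hc : c ∈ Set.Ioo (1:ℝ) 2)
    (hcsol : 1 = (c - 1) * c ^ (N - 1))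
    (hcmax : ∀ c' : ℝ, 1 = (c' - 1) * c' ^ (N - 1) → c' ≤ c)
    (hη0 : 0 < η)
    (hη : η < 1 / (8 * (N:ℝ) * (c * M) ^ (2*N - 2))) :
    (∀ k : ℕ, 0 < d₁ k * d₂ k ^ (N-1) ∧ d₁ k * d₂ k ^ (N-1) ≤ lam ∧ d₂ k ≤ c * M) ∧
    Filter.Tendsto (fun k => d₁ k * d₂ k ^ (N-1)) Filter.atTop (nhds lam) := by
  obtain ⟨n, rfl⟩ : ∃ n, N = n + 2 := ⟨N - 2, by omega⟩
  have e1 : n + 2 - 1 = n + 1 := by omega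
  have e2 : n + 2 - 2 = n := by omega
  have e3 : 2 * (n + 2) - 2 = 2 * n + 2 := by omega
  simp only [e1, e2, e3] at *
  have hα : 0 < α := hβ.trans hβα
  have hαM : α ≤ M := hM ▸ le_max_left _ _
  have hM0 : 0 < M := hα.trans_le hαM
  have hlamM : lam ≤ M ^ (n + 2) := by
    calc lam = (lam ^ ((1 : ℝ) / (n + 2 : ℕ))) ^ (n + 2) := by
          rw [one_div, Real.rpow_inv_natCast_pow hlam.le (by omega)]
      _ ≤ M ^ (n + 2) := by
          gcongr
          exact hM ▸ le_max_right _ _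
  have hc1 : 1 < c := hc.1
  have hηK : 8 * ((n : ℝ) + 2) * (η * (c * M) ^ (2 * n + 2)) ≤ 1 := by
    have h := (lt_div_iff₀ (by positivity)).1 hη
    push_cast at h
    linarith
  have hgood : ∀ k, Good n lam α β (c * M) (d₁ k) (d₂ k) := by
    intro k
    induction k with
    | zero =>
      rw [h10, h20]
      exact ⟨by linarith, le_rfl, by linarith, by linarith, hinit, by nlinarith⟩
    | succ k ih =>
      rw [h1rec, h2rec]
      exact (ih.step hα (by linarith) hM0 hc1 hcsol hlamM hη0 hηK).1
  have hstep : ∀ k, lam - d₁ (k + 1) * d₂ (k + 1) ^ (n + 1)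
      ≤ (1 - η * α ^ (2 * n + 2)) * (lam - d₁ k * d₂ k ^ (n + 1)) := by
    intro k
    rw [h1rec, h2rec]
    exact ((hgood k).step hα (by linarith) hM0 hc1 hcsol hlamM hη0 hηK).2
  refine ⟨fun k => ⟨mul_pos (hgood k).x_pos (pow_pos (hα.trans_le (hgood k).le_y) _),
    (hgood k).prod, (hgood k).y_le⟩, ?_⟩
  have hq0 : 0 ≤ 1 - η * α ^ (2 * n + 2) := by
    have h1 : η * α ^ (2 * n + 2) ≤ η * (c * M) ^ (2 * n + 2) := by
      gcongr
      nlinarith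
    have h2 : 0 ≤ (n : ℝ) * (η * (c * M) ^ (2 * n + 2)) := by positivity
    have h3 : 0 ≤ η * (c * M) ^ (2 * n + 2) := by positivity
    linarith
  have hq1 : 1 - η * α ^ (2 * n + 2) < 1 := by
    have : 0 < η * α ^ (2 * n + 2) := by positivity
    linarith
  have hgeom : ∀ k, lam - d₁ k * d₂ k ^ (n + 1)
      ≤ (1 - η * α ^ (2 * n + 2)) ^ k * (lam - d₁ 0 * d₂ 0 ^ (n + 1)) := by
    intro k
    induction k with
    | zero => simp
    | succ k ih =>
      rw [pow_succ' (1 - η * α ^ (2 * n + 2)), mul_assoc]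
      exact (hstep k).trans (by gcongr)
  have hlim : Filter.Tendsto (fun k => lam - d₁ k * d₂ k ^ (n + 1)) Filter.atTop (nhds 0) := by
    refine squeeze_zero (fun k => sub_nonneg.2 (hgood k).prod) hgeom ?_
    simpa using (tendsto_pow_atTop_nhds_zero_of_lt_one hq0 hq1).mul_const
      (lam - d₁ 0 * d₂ 0 ^ (n + 1))
  simpa using hlim.const_sub lam
end

section
/- Let N ≥ 2, λ ≥ 0, 0 < β < α with (α−β)·α^{N−1} > λ, and let d₁, d₂ be the perturbed gradient-descent sequences. If 0 < η < 1/(9N·α^{2N−2}), then for all k ∈ ℕ one has 0 < d₁(k)·d₂(k)^{N−1} ≤ (α−β)·α^{N−1} and d₂(k) ≤ α, and moreover d₁(k)·d₂(k)^{N−1} → λ as k → ∞. -/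
/-!
Write `p = d₁ d₂^(N-1)` and `δ = p - λ`. The region
`0 < d₁`, `d₁ + β ≤ d₂ ≤ α`, `λ ≤ p` is invariant under one gradient step. Indeed
`d₂ - d₁` is multiplied by `1 + η δ d₂^(N-2) ≥ 1`, so the initial gap `β` never shrinks; both
coordinates decrease because `δ ≥ 0`; and they stay positive, and the product stays at or above `λ`,
because the step size is small: Bernoulli's inequality gives
`p' - λ ≥ δ (1 - N η α^(2N-2)) ≥ 0` for the next product `p'` (`step_lower`).

Since the gap forces `d₂ ≥ β` and `d₂` decreases, `p' - λ ≤ δ (1 - η d₂^(2N-2)) ≤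
δ (1 - η β^(2N-2))` (`step_upper`), so `p - λ` decays geometrically to `0`.
-/

/-- For `0 < x ≤ y ≤ α` and a product at least `lam`, one gradient step keeps both coordinates
positive and does not carry the product below `lam`. Here `N = m + 2`. -/
lemma step_lower (m : ℕ) (x y lam α η : ℝ) (hlam : 0 ≤ lam) (hx : 0 < x) (hxy : x ≤ y)
    (hyα : y ≤ α) (hη : 0 < η) (hc : ((m : ℝ) + 2) * (η * (α ^ (m+1)) ^ 2) < 1)
    (hp : lam ≤ x * y ^ (m+1)) :
    0 < x - η * y ^ (m+1) * (x * y ^ (m+1) - lam) ∧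
    0 < y - η * x * y ^ m * (x * y ^ (m+1) - lam) ∧
    lam ≤ (x - η * y ^ (m+1) * (x * y ^ (m+1) - lam)) *
      (y - η * x * y ^ m * (x * y ^ (m+1) - lam)) ^ (m+1) := by
  have hy : 0 < y := hx.trans_le hxy
  have hY : 0 < y ^ m := pow_pos hy m
  have hyp : y ^ (m+1) = y ^ m * y := pow_succ y m
  have hc0 : 0 ≤ η * (α ^ (m+1)) ^ 2 := by positivity
  have hm : (0:ℝ) ≤ m := Nat.cast_nonneg m
  have h1 : η * (y ^ (m+1)) ^ 2 ≤ η * (α ^ (m+1)) ^ 2 := by gcongr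
  have h2 : η * (x * y ^ m) ^ 2 ≤ η * (y ^ (m+1)) ^ 2 := by
    rw [hyp, mul_comm (y ^ m) y]; gcongr
  have hc1 : η * (α ^ (m+1)) ^ 2 < 1 := by nlinarith
  have hX : 0 < x - η * y ^ (m+1) * (x * y ^ (m+1) - lam) := by
    have e : x - η * y ^ (m+1) * (x * y ^ (m+1) - lam)
        = x * (1 - η * (y ^ (m+1)) ^ 2) + η * y ^ (m+1) * lam := by ring
    have : 0 < x * (1 - η * (y ^ (m+1)) ^ 2) := mul_pos hx (by linarith)
    have : 0 ≤ η * y ^ (m+1) * lam := by positivity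
    linarith
  set δ := x * y ^ (m+1) - lam with hδ
  have hδ0 : 0 ≤ δ := by linarith
  -- the relative decrease of `y`, so that the new value of `y` is `y * (1 - u)`
  set u := η * x * y ^ m * δ / y with hu
  have hyu : y * u = η * x * y ^ m * δ := by rw [hu]; field_simp
  have hu1 : u ≤ η * (x * y ^ m) ^ 2 := by
    rw [hu, div_le_iff₀ hy]
    calc η * x * y ^ m * δ ≤ η * x * y ^ m * (x * y ^ (m+1)) := by gcongr; linarith
      _ = η * (x * y ^ m) ^ 2 * y := by rw [hyp]; ring
  have e2 : y - η * x * y ^ m * δ = y * (1 + -u) := by rw [← hyu]; ring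
  refine ⟨hX, by rw [e2]; exact mul_pos hy (by linarith), ?_⟩
  have hB : 1 + ((m + 1 : ℕ) : ℝ) * (-u) ≤ (1 + -u) ^ (m+1) :=
    one_add_mul_le_pow (by linarith) _
  push_cast at hB
  rw [e2, mul_pow]
  have hu0 : 0 ≤ u := by positivity
  have hyu2 : x * y ^ (m+1) * u = η * (x * y ^ m) ^ 2 * δ := by
    rw [hyp]; linear_combination x * y ^ m * hyu
  calc lam ≤ lam + δ * (1 - (m + 2) * (η * (α ^ (m+1)) ^ 2)) := by
        have := mul_nonneg hδ0 (sub_nonneg.2 hc.le); linarith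
    _ ≤ lam + δ * (1 - η * (y ^ (m+1)) ^ 2 - (m + 1) * (η * (x * y ^ m) ^ 2)) := by
        have := mul_le_mul_of_nonneg_left (h2.trans h1) (by linarith : (0:ℝ) ≤ m + 1)
        refine add_le_add_right (mul_le_mul_of_nonneg_left ?_ hδ0) lam
        linarith
    _ ≤ (x - η * y ^ (m+1) * δ) * (y ^ (m+1) * (1 + (m + 1) * (-u))) := by
        -- the difference of the two sides is the second-order term of the expansion
        have h3 : 0 ≤ η * y ^ (m+1) * δ * (y ^ (m+1) * ((m + 1) * u)) := by positivity
        linear_combination h3 + (m + 1) * hyu2 + hδ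
    _ ≤ (x - η * y ^ (m+1) * δ) * (y ^ (m+1) * (1 + -u) ^ (m+1)) := by gcongr

/-- If the step keeps the first coordinate nonnegative and the second in `[0, y]`, the excess of
the product over `lam` shrinks at least by the factor `1 - η y^(2n)`. -/
lemma step_upper (n : ℕ) (x y y' lam η : ℝ)
    (hX : 0 ≤ x - η * y ^ n * (x * y ^ n - lam)) (hy' : 0 ≤ y') (hyy : y' ≤ y) :
    (x - η * y ^ n * (x * y ^ n - lam)) * y' ^ n - lam
      ≤ (1 - η * (y ^ n) ^ 2) * (x * y ^ n - lam) := by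
  have h := mul_le_mul_of_nonneg_left (pow_le_pow_left₀ hy' hyy n) hX
  linarith


/-- **Perturbed dynamics, small nonnegative eigenvalue.** For `N ≥ 2`, `λ ≥ 0`,
`0 < β < α` with `(α−β)α^{N−1} > λ`, and `0 < η < 1/(9Nα^{2N−2})`, the iterates satisfy
`0 < d₁(k) d₂(k)^{N−1} ≤ (α−β)α^{N−1}` and `d₂(k) ≤ α` for all `k`, and the product
converges to `λ`. -/
theorem perturbed_product_small_nonnegative_lambda
    (N : ℕ) (hN : 2 ≤ N) (lam α β η : ℝ) (hlam : 0 ≤ lam) (hβ : 0 < β) (hβα : β < α)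
    (hinit : lam < (α - β) * α ^ (N-1))
    (d₁ d₂ : ℕ → ℝ) (h10 : d₁ 0 = α - β) (h20 : d₂ 0 = α)
    (h1rec : ∀ k : ℕ, d₁ (k+1) = d₁ k - η * d₂ k ^ (N-1) * (d₁ k * d₂ k ^ (N-1) - lam))
    (h2rec : ∀ k : ℕ, d₂ (k+1) = d₂ k - η * d₁ k * d₂ k ^ (N-2) * (d₁ k * d₂ k ^ (N-1) - lam))
    (hη0 : 0 < η)
    (hη : η < 1 / (9 * (N:ℝ) * α ^ (2*N - 2))) :
    (∀ k : ℕ, 0 < d₁ k * d₂ k ^ (N-1) ∧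
      d₁ k * d₂ k ^ (N-1) ≤ (α - β) * α ^ (N-1) ∧ d₂ k ≤ α) ∧
    Filter.Tendsto (fun k => d₁ k * d₂ k ^ (N-1)) Filter.atTop (nhds lam) := by
  obtain ⟨m, rfl⟩ : ∃ m, N = m + 2 := ⟨N - 2, by omega⟩
  simp only [show m + 2 - 1 = m + 1 by omega, show m + 2 - 2 = m by omega,
    show 2 * (m + 2) - 2 = (m + 1) * 2 by omega, pow_mul] at *
  have hα : 0 < α := hβ.trans hβα
  have hm : (0:ℝ) ≤ m := Nat.cast_nonneg m
  have hc : ((m : ℝ) + 2) * (η * (α ^ (m+1)) ^ 2) < 1 := by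
    rw [lt_div_iff₀ (by positivity)] at hη
    push_cast at hη
    have : 0 ≤ ((m : ℝ) + 2) * (η * (α ^ (m+1)) ^ 2) := by positivity
    linarith
  have hβq : η * (β ^ (m+1)) ^ 2 ≤ η * (α ^ (m+1)) ^ 2 := by gcongr
  have hq0 : 0 ≤ 1 - η * (β ^ (m+1)) ^ 2 := by
    have : 0 ≤ η * (α ^ (m+1)) ^ 2 := by positivity
    nlinarith
  have hq1 : 1 - η * (β ^ (m+1)) ^ 2 < 1 := by
    have : 0 < η * (β ^ (m+1)) ^ 2 := by positivity
    linarith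
  set q := 1 - η * (β ^ (m+1)) ^ 2 with hq
  have inv : ∀ k, 0 < d₁ k ∧ d₁ k + β ≤ d₂ k ∧ d₂ k ≤ α ∧ lam ≤ d₁ k * d₂ k ^ (m+1) ∧
      d₁ k * d₂ k ^ (m+1) - lam ≤ q ^ k * ((α - β) * α ^ (m+1) - lam) := by
    intro k
    induction k with
    | zero =>
      rw [h10, h20]
      exact ⟨by linarith, by linarith, le_rfl, hinit.le, by simp⟩
    | succ k ih =>
      obtain ⟨hx, hgap, hyα, hp, hdec⟩ := ih
      have hy : 0 < d₂ k := by linarith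
      obtain ⟨hX, hY, hP⟩ :=
        step_lower m (d₁ k) (d₂ k) lam α η hlam hx (by linarith) hyα hη0 hc hp
      have hδ : 0 ≤ d₁ k * d₂ k ^ (m+1) - lam := by linarith
      have hyy : d₂ k - η * d₁ k * d₂ k ^ m * (d₁ k * d₂ k ^ (m+1) - lam) ≤ d₂ k := by
        have : 0 ≤ η * d₁ k * d₂ k ^ m * (d₁ k * d₂ k ^ (m+1) - lam) := by positivity
        linarith
      have hU := step_upper (m+1) (d₁ k) (d₂ k) _ lam η hX.le hY.le hyy
      have hβy : β ≤ d₂ k := by linarith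
      rw [h1rec, h2rec]
      refine ⟨hX, ?_, hyy.trans hyα, hP, hU.trans ?_⟩
      · have hg : 0 ≤ η * d₂ k ^ m * (d₁ k * d₂ k ^ (m+1) - lam) * (d₂ k - d₁ k) :=
          mul_nonneg (by positivity) (by linarith)
        have e : η * d₂ k ^ (m+1) * (d₁ k * d₂ k ^ (m+1) - lam)
            = η * d₂ k ^ m * (d₁ k * d₂ k ^ (m+1) - lam) * d₂ k := by
          rw [pow_succ (d₂ k) m]; ring
        rw [e]
        linarith
      · calc (1 - η * (d₂ k ^ (m+1)) ^ 2) * (d₁ k * d₂ k ^ (m+1) - lam)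
            ≤ q * (d₁ k * d₂ k ^ (m+1) - lam) := by rw [hq]; gcongr
          _ ≤ q * (q ^ k * ((α - β) * α ^ (m+1) - lam)) := by gcongr
          _ = q ^ (k+1) * ((α - β) * α ^ (m+1) - lam) := by ring
  refine ⟨fun k => ?_, ?_⟩
  · obtain ⟨hx, hgap, hyα, hp, hdec⟩ := inv k
    have hy : 0 < d₂ k := by linarith
    refine ⟨by positivity, ?_, hyα⟩
    have := mul_le_mul_of_nonneg_right (pow_le_one₀ (n := k) hq0 hq1.le) (sub_nonneg.2 hinit.le)
    linarith
  · have hlim : Filter.Tendsto (fun k : ℕ => lam + q ^ k * ((α - β) * α ^ (m+1) - lam))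
        Filter.atTop (nhds lam) := by
      simpa using ((tendsto_pow_atTop_nhds_zero_of_lt_one hq0 hq1).mul_const
        ((α - β) * α ^ (m+1) - lam)).const_add lam
    refine tendsto_of_tendsto_of_tendsto_of_le_of_le tendsto_const_nhds hlim
      (fun k => (inv k).2.2.2.1) (fun k => ?_)
    have := (inv k).2.2.2.2
    simp only
    linarith
end

section
/- Let d be the gradient-descent scalar sequence with initialization α > 0 and step size η > 0. (i) If N = 1, η > 2 and α ≠ λ, then |d(k) − λ| → ∞ as k → ∞ (the sequence diverges). (ii) If N ≥ 2, λ > 0 and η > 2/(N·λ^{2−2/N}), then λ^{1/N} is an unstable fixed point of the iteration map g(x) = x − η·x^{N−1}·(x^N − λ): one has g(λ^{1/N}) = λ^{1/N} and |g′(λ^{1/N})| > 1. (iii) If N ≥ 2, λ < 0 and η > (1 + 2^{1/N})·max(α, |λ|^{1/N}) / min(α, |λ|^{1/N})^{2N−1}, then |d(k)| → ∞ as k → ∞. -/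
/-!
Parts (i) and (iii) are geometric blow-up; part (ii) is a derivative computation.

For `N = 1` the error is multiplied by `1 - η` at every step. For `N ≥ 2` and `λ > 0`, put
`μ = λ^{1/N}`; then `g'(μ) = 1 - η N μ^{2N-2}` and `μ^{2N-2} = λ^{2-2/N}`, so the hypothesis on `η`
says exactly `g'(μ) < -1`.

For `N ≥ 2` and `λ < 0`, put `μ = |λ|^{1/N}`, `c = 2^{1/N}`, `M = max(α, μ)`, `m = min(α, μ)`.
The hypothesis gives `(1 + c) M < η m^{2N-1}`. The first step satisfies
`η α^{N-1}(α^N + μ^N) ≥ 2 η m^{2N-1} ≥ 2 (1 + c) M`, hence `|d(1)| ≥ c M` (`gd_first_step`). Once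
`|x| ≥ c M`, one has `|x|^N ≥ 2 M^N ≥ 2 |λ|`, so the gradient term has size at least
`η |x|^{2N-1} / 2 ≥ (1 + c)|x|`, and the next iterate has size at least `c |x|`
(`gd_growth_step`). Since `c > 1`, the sequence blows up geometrically.
-/

/-- The multiplicative growth is only required above the threshold `b`, which is never left because
`c > 1`. -/
lemma tendsto_atTop_of_growth_above (u : ℕ → ℝ) (b c : ℝ) (hb : 0 < b) (hc : 1 < c)
    (h0 : b ≤ u 0) (h : ∀ k, b ≤ u k → c * u k ≤ u (k + 1)) :
    Filter.Tendsto u Filter.atTop Filter.atTop := by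
  have key : ∀ k, b ≤ u k ∧ c ^ k * b ≤ u k := by
    intro k
    induction k with
    | zero => simpa using h0
    | succ k ih =>
      have h1 := h k ih.1
      refine ⟨by nlinarith [ih.1], ?_⟩
      calc c ^ (k + 1) * b = c * (c ^ k * b) := by ring
        _ ≤ c * u k := by gcongr; exact ih.2
        _ ≤ u (k + 1) := h1
  exact Filter.tendsto_atTop_mono (fun k => (key k).2)
    ((tendsto_pow_atTop_atTop_of_one_lt hc).atTop_mul_const hb)

/-- Far from the origin (`|x| ≥ c M`) a gradient step multiplies the size of the iterate by at least
`c`. Here `N = n + 2`, so that `2 N - 1 = 2 n + 3`. -/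
lemma gd_growth_step (n : ℕ) (lam η c M m x : ℝ) (hη : 0 < η) (hc : 1 < c)
    (hcN : c ^ (n + 2) = 2) (hm : 0 < m) (hmM : m ≤ M) (hlam : |lam| ≤ M ^ (n + 2))
    (hstep : (1 + c) * M ≤ η * m ^ (2 * n + 3)) (hx : c * M ≤ |x|) :
    c * |x| ≤ |x - η * x ^ (n + 1) * (x ^ (n + 2) - lam)| := by
  have hM : 0 < M := hm.trans_le hmM
  have hx0 : 0 < |x| := lt_of_lt_of_le (by positivity) hx
  have hpow : 2 * M ^ (n + 2) ≤ |x| ^ (n + 2) := by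
    calc 2 * M ^ (n + 2) = (c * M) ^ (n + 2) := by rw [mul_pow, hcN]
      _ ≤ |x| ^ (n + 2) := by gcongr
  -- `|x|^{2N-2} ≥ 2 M^{2N-2}`, because `c^{2N-2} = c^N c^{N-2} ≥ 2`.
  have hpow2 : 2 * M ^ (2 * n + 2) ≤ |x| ^ (2 * n + 2) := by
    have hMx : M ≤ |x| := by nlinarith
    calc 2 * M ^ (2 * n + 2) = (2 * M ^ (n + 2)) * M ^ n := by ring
      _ ≤ |x| ^ (n + 2) * |x| ^ n := by gcongr
      _ = |x| ^ (2 * n + 2) := by ring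
  have hηM : 1 + c ≤ η * M ^ (2 * n + 2) := by
    refine le_of_mul_le_mul_right ?_ hM
    calc (1 + c) * M ≤ η * m ^ (2 * n + 3) := hstep
      _ ≤ η * M ^ (2 * n + 3) := by gcongr
      _ = η * M ^ (2 * n + 2) * M := by ring
  have hdiff : |x| ^ (n + 2) / 2 ≤ |x ^ (n + 2) - lam| := by
    have := abs_sub_abs_le_abs_sub (x ^ (n + 2)) lam
    rw [abs_pow] at this
    linarith
  have hgrad : (1 + c) * |x| ≤ |η * x ^ (n + 1) * (x ^ (n + 2) - lam)| := by
    rw [abs_mul, abs_mul, abs_pow, abs_of_pos hη]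
    calc (1 + c) * |x| ≤ η * M ^ (2 * n + 2) * |x| := by gcongr
      _ = η * (2 * M ^ (2 * n + 2)) / 2 * |x| := by ring
      _ ≤ η * |x| ^ (2 * n + 2) / 2 * |x| := by gcongr
      _ = η * |x| ^ (n + 1) * (|x| ^ (n + 2) / 2) := by ring
      _ ≤ η * |x| ^ (n + 1) * |x ^ (n + 2) - lam| := by gcongr
  have := abs_sub_abs_le_abs_sub (η * x ^ (n + 1) * (x ^ (n + 2) - lam)) x
  rw [abs_sub_comm _ x] at this
  linarith

/-- The first gradient step, from `a ∈ [m, M]` with `λ ≤ -m^N`, already lands at distance at least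
`c M` from the origin. Here `N = n + 2`. -/
lemma gd_first_step (n : ℕ) (lam η c M m a : ℝ) (hη : 0 < η) (hc : 1 < c) (hm : 0 < m)
    (hma : m ≤ a) (haM : a ≤ M) (hlam : m ^ (n + 2) ≤ -lam)
    (hstep : (1 + c) * M ≤ η * m ^ (2 * n + 3)) :
    c * M ≤ |a - η * a ^ (n + 1) * (a ^ (n + 2) - lam)| := by
  have ha : 0 < a := hm.trans_le hma
  have hM : 0 < M := ha.trans_le haM
  have hsum : 2 * m ^ (n + 2) ≤ a ^ (n + 2) - lam := by
    have : m ^ (n + 2) ≤ a ^ (n + 2) := by gcongr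
    linarith
  have hgrad : 2 * ((1 + c) * M) ≤ η * a ^ (n + 1) * (a ^ (n + 2) - lam) := by
    calc 2 * ((1 + c) * M) ≤ 2 * (η * m ^ (2 * n + 3)) := by gcongr
      _ = η * m ^ (n + 1) * (2 * m ^ (n + 2)) := by ring
      _ ≤ η * a ^ (n + 1) * (a ^ (n + 2) - lam) := by gcongr
  rw [abs_sub_comm]
  refine le_trans ?_ (le_abs_self _)
  nlinarith


/-- **Necessity of the step-size condition (Lemma C.1).** For the gradient-descent scalar
sequence `d(k+1) = d(k) − η d(k)^{N−1}(d(k)^N − λ)`, `d(0) = α > 0`: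
(i) if `N = 1`, `η > 2` and `α ≠ λ`, then `|d(k) − λ| → ∞`;
(ii) if `N ≥ 2`, `λ > 0` and `η > 2/(Nλ^{2−2/N})`, then `λ^{1/N}` is an unstable fixed
point of `g(x) = x − η x^{N−1}(x^N − λ)`: `g(λ^{1/N}) = λ^{1/N}` and `|g'(λ^{1/N})| > 1`;
(iii) if `N ≥ 2`, `λ < 0` and
`η > (1 + 2^{1/N}) max(α,|λ|^{1/N}) / min(α,|λ|^{1/N})^{2N−1}`, then `|d(k)| → ∞`. -/
theorem scalar_gd_stepsize_necessary
    (N : ℕ) (lam α η : ℝ) (hα : 0 < α) (hη : 0 < η)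
    (d : ℕ → ℝ) (hd0 : d 0 = α)
    (hrec : ∀ k : ℕ, d (k+1) = d k - η * d k ^ (N-1) * (d k ^ N - lam)) :
    (N = 1 → 2 < η → α ≠ lam →
      Filter.Tendsto (fun k => |d k - lam|) Filter.atTop Filter.atTop) ∧
    (2 ≤ N → 0 < lam → 2 / ((N:ℝ) * lam ^ ((2:ℝ) - 2/N)) < η →
      (lam ^ ((1:ℝ)/N) - η * (lam ^ ((1:ℝ)/N)) ^ (N-1) * ((lam ^ ((1:ℝ)/N)) ^ N - lam) =
        lam ^ ((1:ℝ)/N) ∧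
       1 < |deriv (fun x : ℝ => x - η * x ^ (N-1) * (x ^ N - lam)) (lam ^ ((1:ℝ)/N))|)) ∧
    (2 ≤ N → lam < 0 →
      (1 + (2:ℝ) ^ ((1:ℝ)/N)) * max α (|lam| ^ ((1:ℝ)/N)) /
        (min α (|lam| ^ ((1:ℝ)/N))) ^ (2*N - 1) < η →
      Filter.Tendsto (fun k => |d k|) Filter.atTop Filter.atTop) := by
  refine ⟨?_, ?_, ?_⟩
  · rintro rfl h2 hne
    refine tendsto_atTop_of_growth_above _ |α - lam| (η - 1) (abs_pos.2 (sub_ne_zero.2 hne))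
      (by linarith) (by simp [hd0]) ?_
    intro k _
    have : d (k + 1) - lam = -((η - 1) * (d k - lam)) := by
      rw [hrec]; simp; ring
    rw [this, abs_neg, abs_mul, abs_of_pos (by linarith : 0 < η - 1)]
  · intro hN hlam hstep
    obtain ⟨n, rfl⟩ := Nat.exists_eq_add_of_le' hN
    have hN0 : ((n + 2 : ℕ) : ℝ) ≠ 0 := by positivity
    have hpow : (lam ^ ((1:ℝ) / (n + 2 : ℕ))) ^ (n + 2) = lam := by
      rw [one_div]; exact Real.rpow_inv_natCast_pow hlam.le (by omega)
    have hexp : lam ^ ((2:ℝ) - 2 / (n + 2 : ℕ)) =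
        (lam ^ ((1:ℝ) / (n + 2 : ℕ))) ^ (2 * n + 2) := by
      rw [← Real.rpow_mul_natCast hlam.le]
      congr 1
      field_simp
      push_cast
      ring
    have hμ : 0 < lam ^ ((1:ℝ) / (n + 2 : ℕ)) := Real.rpow_pos_of_pos hlam _
    rw [hexp] at hstep
    generalize lam ^ ((1:ℝ) / (n + 2 : ℕ)) = μ at *
    refine ⟨by rw [hpow]; ring, ?_⟩
    have hder : HasDerivAt (fun x : ℝ => x - η * x ^ (n + 2 - 1) * (x ^ (n + 2) - lam))
        (1 - η * ((n + 2 : ℕ) : ℝ) * μ ^ (2 * n + 2)) μ := by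
      have h1 := ((hasDerivAt_pow (n + 2 - 1) μ).const_mul η).mul
        ((hasDerivAt_pow (n + 2) μ).sub_const lam)
      refine ((hasDerivAt_id μ).sub h1).congr_deriv ?_
      rw [hpow]
      simp only [Nat.add_sub_cancel, show n + 2 - 1 = n + 1 by omega]
      ring
    rw [hder.deriv, lt_abs]
    right
    rw [div_lt_iff₀ (by positivity)] at hstep
    linarith
  · intro hN hlam hstep
    obtain ⟨n, rfl⟩ := Nat.exists_eq_add_of_le' hN
    have hpow : (|lam| ^ ((1:ℝ) / (n + 2 : ℕ))) ^ (n + 2) = |lam| := by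
      rw [one_div]; exact Real.rpow_inv_natCast_pow (abs_nonneg _) (by omega)
    have hcN : ((2:ℝ) ^ ((1:ℝ) / (n + 2 : ℕ))) ^ (n + 2) = 2 := by
      rw [one_div]; exact Real.rpow_inv_natCast_pow (by norm_num) (by omega)
    have hc : 1 < (2:ℝ) ^ ((1:ℝ) / (n + 2 : ℕ)) :=
      Real.one_lt_rpow (by norm_num) (by positivity)
    have hμ : 0 < |lam| ^ ((1:ℝ) / (n + 2 : ℕ)) :=
      Real.rpow_pos_of_pos (abs_pos.2 hlam.ne) _
    generalize |lam| ^ ((1:ℝ) / (n + 2 : ℕ)) = μ at *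
    generalize (2:ℝ) ^ ((1:ℝ) / (n + 2 : ℕ)) = c at *
    have hm : 0 < min α μ := lt_min hα hμ
    have hM : 0 < max α μ := lt_max_of_lt_left hα
    rw [div_lt_iff₀ (by positivity), show 2 * (n + 2) - 1 = 2 * n + 3 by omega] at hstep
    rw [show n + 2 - 1 = n + 1 by omega] at hrec
    -- The growth bound applies from index `1` on: `|d 0| = α` may lie below the threshold.
    rw [← Filter.tendsto_add_atTop_iff_nat 1]
    refine tendsto_atTop_of_growth_above _ (c * max α μ) c (by positivity) hc ?_ ?_
    · rw [hrec, hd0]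
      refine gd_first_step n lam η c _ _ α hη hc hm (min_le_left _ _) (le_max_left _ _) ?_ hstep.le
      rw [← abs_of_neg hlam, ← hpow]
      exact pow_le_pow_left₀ hm.le (min_le_right _ _) _
    · intro k hk
      rw [hrec (k + 1)]
      refine gd_growth_step n lam η c _ _ _ hη hc hcN hm min_le_max ?_ hstep.le hk
      rw [← hpow]
      exact pow_le_pow_left₀ hμ.le (le_max_right _ _) _
end
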